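/- arXiv:0803.2131 — 5 statements merged into one kernel-verified Lean document; each statement's English description precedes it below -/
import Mathlib

section
/- Let σ₀ = {0} ∪ {(-1)^k/k : k = 1, 2, 3, ...}, a compact subset of ℝ. For a function g : σ₀ → ℂ define the sequence U(g) = (a_1, a_2, a_3, ...) by a_1 = g(-1), a_{2m} = g(1/(2m)) − g(1/(2m+2)) for m ≥ 1, and a_{2m+1} = g(−1/(2m+1)) − g(−1/(2m−1)) for m ≥ 1. Then U is a bijection from the set of functions g : σ₀ → ℂ that are continuous on σ₀ and of bounded variation on σ₀ onto ℓ¹ (absolutely summable complex sequences), and it satisfies the norm estimates ‖U(g)‖_1 ≤ |g(-1)| + var_{σ₀}(g) for every such g, and, for every x ∈ ℓ¹, the function g = U^{-1}(x) satisfies |g(-1)| + var_{σ₀}(g) ≤ 2‖x‖_1. -/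
open MeasureTheory Filter Topology

/-- The set `σ₀ = {0} ∪ {(-1)^k/k : k ≥ 1}`. -/
noncomputable def sigma0 : Set ℝ := {0} ∪ {t : ℝ | ∃ k : ℕ, 1 ≤ k ∧ t = (-1) ^ k / k}

lemma neg_one_mem_sigma0 : (-1 : ℝ) ∈ sigma0 := Or.inr ⟨1, le_rfl, by norm_num⟩

lemma mem_even (j : ℕ) : (1 : ℝ) / (2 * j + 2) ∈ sigma0 := by
  refine Or.inr ⟨2 * j + 2, by omega, ?_⟩
  rw [Even.neg_one_pow ⟨j + 1, by ring⟩]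
  push_cast
  ring

lemma mem_even' (j : ℕ) : (1 : ℝ) / (2 * j + 4) ∈ sigma0 := by
  refine Or.inr ⟨2 * j + 4, by omega, ?_⟩
  rw [Even.neg_one_pow ⟨j + 2, by ring⟩]
  push_cast
  ring

lemma mem_odd (j : ℕ) : -(1 : ℝ) / (2 * j + 1) ∈ sigma0 := by
  refine Or.inr ⟨2 * j + 1, by omega, ?_⟩
  rw [Odd.neg_one_pow ⟨j, by ring⟩]
  push_cast
  ring

lemma mem_odd' (j : ℕ) : -(1 : ℝ) / (2 * j + 3) ∈ sigma0 := by
  refine Or.inr ⟨2 * j + 3, by omega, ?_⟩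
  rw [Odd.neg_one_pow ⟨j + 1, by ring⟩]
  push_cast
  ring

namespace S4

noncomputable def q (i : ℕ) : ↥sigma0 := ⟨-1 / (2 * i + 1), mem_odd i⟩
noncomputable def p (i : ℕ) : ↥sigma0 := ⟨1 / (2 * i + 2), mem_even i⟩
noncomputable def o : ↥sigma0 := ⟨0, Or.inl rfl⟩

lemma q_zero : q 0 = ⟨-1, neg_one_mem_sigma0⟩ := by
  apply Subtype.ext; simp [q]

lemma q_succ (j : ℕ) : q (j + 1) = ⟨-1 / (2 * j + 3), mem_odd' j⟩ := by
  apply Subtype.ext; simp only [q]; push_cast; congr 1; ring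

lemma p_succ (j : ℕ) : p (j + 1) = ⟨1 / (2 * j + 4), mem_even' j⟩ := by
  apply Subtype.ext; simp only [p]; push_cast; congr 1; ring

lemma cases_pt (t : ↥sigma0) : t = o ∨ (∃ i, t = q i) ∨ ∃ i, t = p i := by
  obtain ⟨t, ht⟩ := t
  rcases ht with ht | ⟨k, hk, rfl⟩
  · left; exact Subtype.ext ht
  · right
    rcases Nat.even_or_odd' k with ⟨i, rfl | rfl⟩
    · right
      obtain ⟨j, rfl⟩ : ∃ j, i = j + 1 := ⟨i - 1, by omega⟩
      refine ⟨j, Subtype.ext ?_⟩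
      simp only [p]
      rw [Even.neg_one_pow ⟨j + 1, by ring⟩]
      push_cast
      ring
    · left
      refine ⟨i, Subtype.ext ?_⟩
      simp only [q]
      rw [Odd.neg_one_pow ⟨i, by ring⟩]
      push_cast
      ring

lemma q_lt_o (i : ℕ) : q i < o := by
  rw [← Subtype.coe_lt_coe]; simp only [q, o]
  rw [neg_div, neg_lt_zero]; positivity

lemma o_lt_p (i : ℕ) : o < p i := by
  rw [← Subtype.coe_lt_coe]; simp only [p, o]
  positivity

lemma q_lt_p (i j : ℕ) : q i < p j := (q_lt_o i).trans (o_lt_p j)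

lemma q_le_q (i j : ℕ) : q i ≤ q j ↔ i ≤ j := by
  rw [← Subtype.coe_le_coe]; simp only [q]
  rw [neg_div, neg_div, neg_le_neg_iff, div_le_div_iff₀ (by positivity) (by positivity)]
  rw [← Nat.cast_le (α := ℝ)]
  constructor <;> intro h <;> linarith

lemma p_le_p (i j : ℕ) : p i ≤ p j ↔ j ≤ i := by
  rw [← Subtype.coe_le_coe]; simp only [p]
  rw [div_le_div_iff₀ (by positivity) (by positivity)]
  rw [← Nat.cast_le (α := ℝ)]
  constructor <;> intro h <;> linarith

lemma q_tendsto : Tendsto q atTop (𝓝 o) := by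
  rw [tendsto_subtype_rng]
  simp only [q, o]
  apply Tendsto.div_atTop tendsto_const_nhds
  apply tendsto_atTop_add_const_right
  exact tendsto_natCast_atTop_atTop.const_mul_atTop (by norm_num)

lemma p_tendsto : Tendsto p atTop (𝓝 o) := by
  rw [tendsto_subtype_rng]
  simp only [p, o]
  apply Tendsto.div_atTop tendsto_const_nhds
  apply tendsto_atTop_add_const_right
  exact tendsto_natCast_atTop_atTop.const_mul_atTop (by norm_num)

noncomputable def c (n : ℕ) : ↥sigma0 := if n % 2 = 0 then q (n / 2) else p (n / 2)

lemma c_le_q (n j : ℕ) : c n ≤ q j ↔ n % 2 = 0 ∧ n / 2 ≤ j := by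
  unfold c
  split_ifs with h
  · simp [q_le_q, h]
  · simp [h, q_lt_p]

lemma c_le_p (n j : ℕ) : c n ≤ p j ↔ n % 2 = 0 ∨ j ≤ n / 2 := by
  unfold c
  split_ifs with h
  · simp [h, (q_lt_p _ _).le]
  · simp [h, p_le_p]

lemma q0_le (t : ↥sigma0) : q 0 ≤ t := by
  rcases cases_pt t with rfl | ⟨i, rfl⟩ | ⟨i, rfl⟩
  · exact (q_lt_o 0).le
  · simp [q_le_q]
  · exact (q_lt_p _ _).le

lemma le_p0 (t : ↥sigma0) : t ≤ p 0 := by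
  rcases cases_pt t with rfl | ⟨i, rfl⟩ | ⟨i, rfl⟩
  · exact (o_lt_p 0).le
  · exact (q_lt_p _ _).le
  · simp [p_le_p]

lemma c_zero : c 0 = q 0 := by simp [c]

lemma exists_sep (n : ℕ) : ∃ r : ℝ, ∀ t : ↥sigma0, c n ≤ t ↔ r < t := by
  unfold c
  split_ifs with h
  · generalize n / 2 = i
    refine ⟨-1 / (2 * i + 1 / 2), fun t => ?_⟩
    have h1 : -1 / (2 * (i : ℝ) + 1 / 2) < 0 := by
      rw [neg_div, neg_lt_zero]; positivity
    rcases cases_pt t with rfl | ⟨j, rfl⟩ | ⟨j, rfl⟩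
    · simp only [(q_lt_o i).le, true_iff]; exact h1
    · rw [q_le_q]; simp only [q]
      rw [neg_div, neg_div, neg_lt_neg_iff, div_lt_div_iff₀ (by positivity) (by positivity)]
      constructor
      · intro h
        have : (i : ℝ) ≤ j := by exact_mod_cast h
        linarith
      · intro h
        by_contra! h2
        have : (j : ℝ) + 1 ≤ i := by exact_mod_cast h2
        linarith
    · simp only [(q_lt_p i j).le, true_iff]; exact h1.trans (o_lt_p j)
  · generalize n / 2 = i
    refine ⟨1 / (2 * i + 3), fun t => ?_⟩
    have h1 : 0 < 1 / (2 * (i : ℝ) + 3) := by positivity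
    rcases cases_pt t with rfl | ⟨j, rfl⟩ | ⟨j, rfl⟩
    · simp only [(o_lt_p i).not_ge, false_iff]; exact h1.not_gt
    · simp only [(q_lt_p j i).not_ge, false_iff]
      have : ((q j : ↥sigma0) : ℝ) < 0 := q_lt_o j
      linarith
    · rw [p_le_p]; simp only [p]
      rw [div_lt_div_iff₀ (by positivity) (by positivity)]
      constructor
      · intro h
        have : (j : ℝ) ≤ i := by exact_mod_cast h
        linarith
      · intro h
        by_contra! h2
        have : (i : ℝ) + 1 ≤ j := by exact_mod_cast h2
        linarith

lemma clopen (n : ℕ) : IsClopen {t : ↥sigma0 | c n ≤ t} := by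
  refine ⟨isClosed_Ici, ?_⟩
  obtain ⟨r, hr⟩ := exists_sep n
  simp only [hr]
  exact isOpen_lt continuous_const continuous_subtype_val

/-- The inverse of `U`. -/
noncomputable def T {E : Type} [NormedAddCommGroup E] (x : ℕ → E) (t : ↥sigma0) : E :=
  ∑' n, {t : ↥sigma0 | c n ≤ t}.indicator (fun _ => x n) t

section
variable {E : Type} [NormedAddCommGroup E] [CompleteSpace E]

lemma norm_ind_le (x : ℕ → E) (n : ℕ) (t : ↥sigma0) :
    ‖{t : ↥sigma0 | c n ≤ t}.indicator (fun _ => x n) t‖ ≤ ‖x n‖ :=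
  norm_indicator_le_norm_self (fun _ => x n) t

lemma summable_ind {x : ℕ → E} (hx : Summable fun n => ‖x n‖) (t : ↥sigma0) :
    Summable fun n => {t : ↥sigma0 | c n ≤ t}.indicator (fun _ => x n) t :=
  Summable.of_norm_bounded hx (fun n => norm_ind_le x n t)

lemma T_cont {x : ℕ → E} (hx : Summable fun n => ‖x n‖) : Continuous (T x) :=
  continuous_tsum (fun n => continuous_const.indicator (by simp [(clopen n).frontier_eq])) hx (norm_ind_le x)

lemma T_sub {x : ℕ → E} (hx : Summable fun n => ‖x n‖) {s t : ↥sigma0} (hst : s ≤ t) :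
    T x t - T x s = ∑' n, if c n ≤ t ∧ ¬ c n ≤ s then x n else 0 := by
  unfold T
  rw [← (summable_ind hx t).tsum_sub (summable_ind hx s)]
  congr 1; ext n
  simp only [Set.indicator, Set.mem_setOf_eq]
  by_cases h1 : c n ≤ s
  · simp [h1, h1.trans hst]
  · by_cases h2 : c n ≤ t <;> simp [h1, h2]

lemma T_sub_single {x : ℕ → E} (hx : Summable fun n => ‖x n‖) {s t : ↥sigma0} (hst : s ≤ t)
    (m : ℕ) (h : ∀ n, c n ≤ t ∧ ¬ c n ≤ s ↔ n = m) : T x t - T x s = x m := by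
  rw [T_sub hx hst]
  simp only [h]
  exact tsum_ite_eq m x

end

lemma T_q0 (x : ℕ → ℂ) : T x (q 0) = x 0 := by
  unfold T
  simp only [Set.indicator, Set.mem_setOf_eq, c_le_q]
  rw [← tsum_ite_eq 0 x]
  congr 1; ext n
  have : (n % 2 = 0 ∧ n / 2 ≤ 0) ↔ n = 0 := by omega
  simp only [this]

lemma T_edist {x : ℕ → ℂ} (hx : Summable fun n => ‖x n‖) {s t : ↥sigma0} (hst : s ≤ t) :
    ‖T x t - T x s‖ ≤ T (fun n => ‖x n‖) t - T (fun n => ‖x n‖) s := by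
  have hx' : Summable fun n => ‖‖x n‖‖ := by simpa using hx
  rw [T_sub hx hst, T_sub hx' hst]
  apply tsum_of_norm_bounded (Summable.hasSum _)
  · intro n; split_ifs <;> simp
  · apply Summable.of_norm_bounded hx
    intro n; split_ifs <;> simp

lemma T_mono {x : ℕ → ℂ} (hx : Summable fun n => ‖x n‖) :
    Monotone (T (fun n => ‖x n‖)) := fun s t hst => by
  have := (norm_nonneg _).trans (T_edist hx hst)
  linarith

lemma T_var {x : ℕ → ℂ} (hx : Summable fun n => ‖x n‖) :
    eVariationOn (T x) Set.univ ≤ ENNReal.ofReal (∑' n, ‖x n‖) := by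
  have hx' : Summable fun n => ‖‖x n‖‖ := by simpa using hx
  calc eVariationOn (T x) Set.univ ≤ eVariationOn (T fun n => ‖x n‖) Set.univ := by
        refine iSup_mono fun u => Finset.sum_le_sum fun i _ => ?_
        have hm := u.2.2.1 (Nat.le_succ i)
        rw [edist_dist, edist_dist, dist_eq_norm, dist_eq_norm]
        apply ENNReal.ofReal_le_ofReal
        exact (T_edist hx hm).trans (Real.le_norm_self _)
    _ ≤ ENNReal.ofReal (T (fun n => ‖x n‖) (p 0) - T (fun n => ‖x n‖) (q 0)) := by
        have := MonotoneOn.eVariationOn_le ((T_mono hx).monotoneOn Set.univ)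
          (Set.mem_univ (q 0)) (Set.mem_univ (p 0))
        have h2 : (Set.univ ∩ Set.Icc (q 0) (p 0)) = Set.univ := by
          ext t; simp [q0_le, le_p0]
        rwa [h2] at this
    _ ≤ _ := by
        apply ENNReal.ofReal_le_ofReal
        rw [T_sub hx' (q0_le _)]
        refine Summable.tsum_le_tsum (fun n => ?_) ?_ hx
        · split_ifs <;> simp
        · apply Summable.of_norm_bounded hx
          intro n; split_ifs <;> simp

noncomputable def U (g : ↥sigma0 → ℂ) (n : ℕ) : ℂ :=
  if n = 0 then g (q 0) else
  if n % 2 = 1 then g (p (n / 2)) - g (p (n / 2 + 1)) else g (q (n / 2)) - g (q (n / 2 - 1))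

lemma U_zero (g : ↥sigma0 → ℂ) : U g 0 = g (q 0) := by simp [U]

lemma U_odd (g : ↥sigma0 → ℂ) (j : ℕ) : U g (2 * j + 1) = g (p j) - g (p (j + 1)) := by
  have h1 : (2 * j + 1) % 2 = 1 := by omega
  have h2 : (2 * j + 1) / 2 = j := by omega
  simp [U, h1, h2]

lemma U_even (g : ↥sigma0 → ℂ) (j : ℕ) : U g (2 * j + 2) = g (q (j + 1)) - g (q j) := by
  have h1 : (2 * j + 2) % 2 = 0 := by omega
  have h2 : (2 * j + 2) / 2 = j + 1 := by omega
  simp [U, h2]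

lemma U_T {x : ℕ → ℂ} (hx : Summable fun n => ‖x n‖) : U (T x) = x := by
  ext n
  rcases Nat.even_or_odd' n with ⟨i, rfl | rfl⟩
  · cases i with
    | zero => simpa [U_zero] using T_q0 x
    | succ j =>
      rw [show 2 * (j + 1) = 2 * j + 2 by ring, U_even]
      apply T_sub_single hx
      · simp [q_le_q]
      · intro n; simp only [c_le_q]; omega
  · rw [U_odd]
    apply T_sub_single hx
    · simp [p_le_p]
    · intro n; simp only [c_le_p]; omega

lemma U_inj {g h : ↥sigma0 → ℂ} (hg : Continuous g) (hh : Continuous h) (e : U g = U h) :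
    g = h := by
  have hq : ∀ j, g (q j) = h (q j) := by
    intro j
    induction j with
    | zero => simpa [U_zero] using congrFun e 0
    | succ j ih =>
      have := congrFun e (2 * j + 2)
      rw [U_even, U_even, ih] at this
      simpa using this
  have ho : g o = h o := by
    refine tendsto_nhds_unique ((hg.tendsto o).comp q_tendsto) ?_
    have : g ∘ q = h ∘ q := funext hq
    rw [this]
    exact (hh.tendsto o).comp q_tendsto
  have hp : ∀ j, g (p j) - h (p j) = g (p 0) - h (p 0) := by
    intro j
    induction j with
    | zero => rfl
    | succ j ih =>
      have := congrFun e (2 * j + 1)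
      rw [U_odd, U_odd] at this
      rw [← ih]
      linear_combination -this
  have hp0 : g (p 0) - h (p 0) = 0 := by
    have h1 := ((hg.sub hh).tendsto o).comp p_tendsto
    have h2 : (g - h) ∘ p = fun _ => g (p 0) - h (p 0) := funext hp
    rw [h2] at h1
    have := tendsto_nhds_unique h1 tendsto_const_nhds
    rw [← this, Pi.sub_apply, ho, sub_self]
  ext t
  rcases cases_pt t with rfl | ⟨i, rfl⟩ | ⟨i, rfl⟩
  · exact ho
  · exact hq i
  · exact sub_eq_zero.1 ((hp i).trans hp0)

lemma U_bound (g : ↥sigma0 → ℂ) :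
    ∑' n, ENNReal.ofReal ‖U g n‖ ≤ ENNReal.ofReal ‖g (q 0)‖ + eVariationOn g Set.univ := by
  have hu : (Set.univ : Set ↥sigma0) = Set.Iic o ∪ Set.Ici o := by
    simp
  rw [hu, eVariationOn.union g isGreatest_Iic isLeast_Ici]
  rw [← tsum_even_add_odd ENNReal.summable ENNReal.summable]
  rw [tsum_eq_zero_add' (f := fun k => ENNReal.ofReal ‖U g (2 * k)‖) ENNReal.summable]
  rw [add_assoc]
  simp only [mul_zero, U_zero]
  gcongr
  · rw [ENNReal.tsum_eq_iSup_nat]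
    refine iSup_le fun N => ?_
    have := eVariationOn.sum_le (f := g) (s := Set.Iic o) (u := q) (n := N)
      (monotone_nat_of_le_succ fun n => by simp [q_le_q]) (fun i => (q_lt_o i).le)
    refine le_trans (le_of_eq (Finset.sum_congr rfl fun i _ => ?_)) this
    rw [show 2 * (i + 1) = 2 * i + 2 by ring, U_even, edist_dist, dist_eq_norm]
  · rw [ENNReal.tsum_eq_iSup_nat]
    refine iSup_le fun N => ?_
    have := eVariationOn.sum_le (f := g ∘ OrderDual.ofDual) (s := OrderDual.ofDual ⁻¹' Set.Ici o)
      (u := fun i => OrderDual.toDual (p i)) (n := N)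
      (monotone_nat_of_le_succ fun n => by simp [p_le_p]) (fun i => (o_lt_p i).le)
    rw [eVariationOn.comp_ofDual] at this
    refine le_trans (le_of_eq (Finset.sum_congr rfl fun i _ => ?_)) this
    rw [U_odd, edist_comm, edist_dist, dist_eq_norm]
    rfl

lemma U_summable {g : ↥sigma0 → ℂ} (hg : BoundedVariationOn g Set.univ) :
    Summable (fun n => ‖U g n‖) ∧
      ∑' n, ‖U g n‖ ≤ ‖g (q 0)‖ + (eVariationOn g Set.univ).toReal := by
  have hb := U_bound g
  have hfin : ENNReal.ofReal ‖g (q 0)‖ + eVariationOn g Set.univ ≠ ⊤ :=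
    ENNReal.add_ne_top.2 ⟨ENNReal.ofReal_ne_top, hg⟩
  have hne := ne_top_of_le_ne_top hfin hb
  have hs : Summable (fun n => ‖U g n‖) := by
    have := ENNReal.summable_toReal hne
    simpa using this
  refine ⟨hs, ?_⟩
  rw [← ENNReal.ofReal_tsum_of_nonneg (fun _ => norm_nonneg _) hs] at hb
  have := (ENNReal.ofReal_le_iff_le_toReal hfin).1 hb
  rwa [ENNReal.toReal_add ENNReal.ofReal_ne_top hg, ENNReal.toReal_ofReal (norm_nonneg _)] at this

end S4

/-- The map `U`, sending a function `g : σ₀ → ℂ` to the sequence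
`(g(-1), g(1/2) - g(1/4), g(-1/3) - g(-1)), g(1/4) - g(1/6), ...)`, is a bijection from the
set of functions on `σ₀` that are continuous and of bounded variation onto `ℓ¹`, and satisfies
`‖U(g)‖₁ ≤ |g(-1)| + var_{σ₀}(g)` and `|g(-1)| + var_{σ₀}(g) ≤ 2‖U(g)‖₁`.
(The sequence `U g : ℕ → ℂ` is `0`-indexed: `(U g) (n)` is the term `a_{n+1}`; the second and
third defining clauses below are the clauses `a_{2m} = g(1/(2m)) - g(1/(2m+2))` and
`a_{2m+1} = g(-1/(2m+1)) - g(-1/(2m-1))` for `m ≥ 1`, reindexed by `m = j + 1`.) -/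
theorem stmt4 :
    ∃ U : (↥sigma0 → ℂ) → (ℕ → ℂ),
      (∀ g : ↥sigma0 → ℂ,
        U g 0 = g ⟨-1, neg_one_mem_sigma0⟩ ∧
        (∀ j : ℕ, U g (2 * j + 1) =
          g ⟨1 / (2 * j + 2), mem_even j⟩ - g ⟨1 / (2 * j + 4), mem_even' j⟩) ∧
        (∀ j : ℕ, U g (2 * j + 2) =
          g ⟨-1 / (2 * j + 3), mem_odd' j⟩ - g ⟨-1 / (2 * j + 1), mem_odd j⟩)) ∧
      Set.BijOn U {g : ↥sigma0 → ℂ | Continuous g ∧ BoundedVariationOn g Set.univ}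
        {x : ℕ → ℂ | Summable fun n => ‖x n‖} ∧
      (∀ g : ↥sigma0 → ℂ, Continuous g → BoundedVariationOn g Set.univ →
        (∑' n : ℕ, ‖U g n‖) ≤
            ‖g ⟨-1, neg_one_mem_sigma0⟩‖ + (eVariationOn g Set.univ).toReal ∧
        ‖g ⟨-1, neg_one_mem_sigma0⟩‖ + (eVariationOn g Set.univ).toReal ≤
            2 * ∑' n : ℕ, ‖U g n‖) := by
  refine ⟨S4.U, fun g => ⟨?_, fun j => ?_, fun j => ?_⟩, ⟨?_, ?_, ?_⟩, fun g hg hb => ⟨?_, ?_⟩⟩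
  · rw [S4.U_zero, S4.q_zero]
  · rw [S4.U_odd, S4.p_succ]; rfl
  · rw [S4.U_even, S4.q_succ]; rfl
  · intro g hg
    exact (S4.U_summable hg.2).1
  · intro g hg h hh e
    exact S4.U_inj hg.1 hh.1 e
  · intro x hx
    exact ⟨S4.T x, ⟨S4.T_cont hx, ne_top_of_le_ne_top ENNReal.ofReal_ne_top (S4.T_var hx)⟩,
      S4.U_T hx⟩
  · rw [← S4.q_zero]
    exact (S4.U_summable hb).2
  · have hs := (S4.U_summable hb).1
    have e : S4.T (S4.U g) = g := S4.U_inj (S4.T_cont hs) hg (S4.U_T hs)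
    have hv := S4.T_var hs
    rw [e] at hv
    have h1 := ENNReal.toReal_le_of_le_ofReal (tsum_nonneg fun _ => norm_nonneg _) hv
    have h2 : ‖S4.U g 0‖ ≤ ∑' n, ‖S4.U g n‖ := hs.le_tsum 0 (fun _ _ => norm_nonneg _)
    rw [S4.U_zero] at h2
    rw [← S4.q_zero]
    linarith
end

section
/- Let σ₀ = {0} ∪ {(-1)^k/k : k = 1, 2, 3, ...}, a compact subset of ℝ, and let ℓ¹ denote the Banach space of absolutely summable complex sequences. There exist a bounded linear operator T on ℓ¹ and a constant C > 0 such that ‖p(T)‖ ≤ C·(sup_{t∈σ₀}|p(t)| + var_{σ₀}(p)) for every polynomial p with complex coefficients (where p(T) is given by the polynomial functional calculus and p is regarded as the function t ↦ p(t) on ℝ), yet there is no BV(σ₀) extension of the polynomial calculus of T. -/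
open MeasureTheory Filter Topology

lemma zero_mem_sigma0 : (0 : ℝ) ∈ sigma0 := Or.inl rfl

lemma mem_sigma0 (k : ℕ) (hk : 1 ≤ k) : ((-1 : ℝ)) ^ k / k ∈ sigma0 :=
  Or.inr ⟨k, hk, rfl⟩

lemma sigma0_eq : sigma0 = insert (0 : ℝ) (Set.range fun k : ℕ => ((-1 : ℝ)) ^ (k + 1) / (k + 1)) := by
  ext t
  simp only [sigma0, Set.mem_union, Set.mem_singleton_iff, Set.mem_setOf_eq, Set.mem_insert_iff,
    Set.mem_range]
  constructor
  · rintro (h | ⟨k, hk, rfl⟩)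
    · exact Or.inl h
    · right
      refine ⟨k - 1, ?_⟩
      have hk' : k - 1 + 1 = k := Nat.succ_pred_eq_of_pos hk
      rw [hk']
      congr 1
      exact_mod_cast congrArg (Nat.cast : ℕ → ℝ) hk'
  · rintro (h | ⟨k, rfl⟩)
    · exact Or.inl h
    · right
      exact ⟨k + 1, Nat.le_add_left 1 k, by push_cast; ring⟩

lemma sigma0_isCompact : IsCompact sigma0 := by
  rw [sigma0_eq]
  have h : Tendsto (fun k : ℕ => ((-1 : ℝ)) ^ (k + 1) / (k + 1)) atTop (𝓝 0) := by
    apply squeeze_zero_norm (a := fun k : ℕ => 1 / ((k : ℝ) + 1))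
    · intro k
      rw [norm_div, norm_pow, norm_neg, norm_one, one_pow]
      simp [Real.norm_eq_abs, abs_of_nonneg (by positivity : (0:ℝ) ≤ (k:ℝ) + 1)]
    · exact tendsto_one_div_add_atTop_nhds_zero_nat
  exact h.isCompact_insert_range

instance : CompactSpace ↥sigma0 := isCompact_iff_compactSpace.mp sigma0_isCompact


/-- The `BV(σ)` norm-type quantity `sup_{t ∈ σ} |f(t)| + var_σ(f)`. -/
noncomputable def bvNorm (σ : Set ℝ) (f : ℝ → ℂ) : ℝ :=
  sSup ((fun t => ‖f t‖) '' σ) + (eVariationOn f σ).toReal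

/-- A `BV(σ)` extension of the polynomial calculus of a bounded operator `T` on a complex
Banach space `X`: a pair `(Ψ, C')` with `C' > 0`, `Ψ` additive and multiplicative on functions
of bounded variation on `σ`, `‖Ψ(f)‖ ≤ C'·(sup_{t∈σ}|f(t)| + var_σ(f))` for such `f`, and
`Ψ(p) = p(T)` for every polynomial `p`. -/
def HasBVExtension {X : Type*} [NormedAddCommGroup X] [NormedSpace ℂ X]
    (σ : Set ℝ) (T : X →L[ℂ] X) : Prop :=
  ∃ (C' : ℝ) (_ : 0 < C') (Ψ : (ℝ → ℂ) → X →L[ℂ] X),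
    (∀ f g : ℝ → ℂ, BoundedVariationOn f σ → BoundedVariationOn g σ →
      Ψ (f + g) = Ψ f + Ψ g ∧ Ψ (f * g) = (Ψ f).comp (Ψ g)) ∧
    (∀ f : ℝ → ℂ, BoundedVariationOn f σ → ‖Ψ f‖ ≤ C' * bvNorm σ f) ∧
    (∀ p : Polynomial ℂ, Ψ (fun t : ℝ => p.eval (t : ℂ)) = Polynomial.aeval T p)


/-! ### Bounded variation preliminaries -/

lemma aux_sigma0_subset {t : ℝ} (ht : t ∈ sigma0) : -1 ≤ t ∧ t ≤ 1 := by
  rcases ht with h | ⟨k, hk, rfl⟩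
  · rw [Set.mem_singleton_iff] at h; subst h; norm_num
  · rw [← abs_le, abs_div, abs_pow, abs_neg, abs_one, one_pow]
    have : (1 : ℝ) ≤ k := by exact_mod_cast hk
    rw [abs_of_nonneg (by linarith), div_le_one (by linarith)]
    exact this

lemma aux_bv_add {f g : ℝ → ℂ} {s : Set ℝ} (hf : BoundedVariationOn f s)
    (hg : BoundedVariationOn g s) : BoundedVariationOn (fun t => f t + g t) s := by
  have : eVariationOn (fun t => f t + g t) s ≤ eVariationOn f s + eVariationOn g s := by
    apply iSup_le
    rintro ⟨n, ⟨u, hu, us⟩⟩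
    calc ∑ i ∈ Finset.range n, edist (f (u (i + 1)) + g (u (i + 1))) (f (u i) + g (u i))
        ≤ ∑ i ∈ Finset.range n, (edist (f (u (i + 1))) (f (u i))
            + edist (g (u (i + 1))) (g (u i))) :=
          Finset.sum_le_sum fun i _ => edist_add_add_le _ _ _ _
      _ = ∑ i ∈ Finset.range n, edist (f (u (i + 1))) (f (u i))
            + ∑ i ∈ Finset.range n, edist (g (u (i + 1))) (g (u i)) := Finset.sum_add_distrib
      _ ≤ _ := add_le_add (eVariationOn.sum_le hu us) (eVariationOn.sum_le hu us)
  exact ne_top_of_le_ne_top (ENNReal.add_ne_top.2 ⟨hf, hg⟩) this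

lemma aux_bv_mul {f g : ℝ → ℂ} {s : Set ℝ} (hf : BoundedVariationOn f s)
    (hg : BoundedVariationOn g s) : BoundedVariationOn (fun t => f t * g t) s := by
  simpa [smul_eq_mul] using hf.fun_smul hg

lemma aux_bv_const (c : ℂ) (s : Set ℝ) : BoundedVariationOn (fun _ : ℝ => c) s := by
  have : eVariationOn (fun _ : ℝ => c) s ≤ 0 := by
    apply iSup_le
    rintro ⟨n, ⟨u, hu, us⟩⟩
    simp
  exact ne_top_of_le_ne_top ENNReal.zero_ne_top this

lemma aux_bv_mono {g : ℝ → ℝ} (hg : Monotone g) :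
    BoundedVariationOn (fun t => (g t : ℂ)) sigma0 := by
  have h1 : BoundedVariationOn g sigma0 := by
    refine (hg.monotoneOn sigma0).boundedVariationOn (C := max |g (-1)| |g 1|) ?_
    intro x hx
    obtain ⟨h1, h2⟩ := aux_sigma0_subset hx
    have a := hg h1
    have b := hg h2
    exact abs_le_max_abs_abs a b
  exact Complex.isometry_ofReal.lipschitz.comp_boundedVariationOn h1

lemma aux_bv_poly (p : Polynomial ℂ) :
    BoundedVariationOn (fun t : ℝ => p.eval (t : ℂ)) sigma0 := by
  have hid : BoundedVariationOn (fun t : ℝ => (t : ℂ)) sigma0 := aux_bv_mono (g := fun t => t)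
    monotone_id
  induction p using Polynomial.induction_on with
  | C a => simpa using aux_bv_const a sigma0
  | add p q hp hq => simpa using aux_bv_add hp hq
  | monomial n a h =>
    have := aux_bv_mul h hid
    refine (congrArg (fun f => BoundedVariationOn f sigma0) ?_).mp this
    ext t
    simp [pow_succ, mul_assoc]

/-- The points `μ n = (-1)^(n+1)/(n+1)`. -/
noncomputable def muPt (n : ℕ) : ℝ := (-1) ^ (n + 1) / ((n + 1 : ℕ) : ℝ)

lemma muPt_mem (n : ℕ) : muPt n ∈ sigma0 := mem_sigma0 (n + 1) (by omega)

lemma muPt_odd (i : ℕ) : muPt (2 * i + 1) = 1 / (2 * i + 2) := by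
  unfold muPt
  have : (-1 : ℝ) ^ (2 * i + 1 + 1) = 1 := Even.neg_one_pow ⟨i + 1, by ring⟩
  rw [this]; push_cast; ring

lemma muPt_even (i : ℕ) : muPt (2 * i) = - (1 / (2 * i + 1)) := by
  unfold muPt
  have : (-1 : ℝ) ^ (2 * i + 1) = -1 := Odd.neg_one_pow ⟨i, by ring⟩
  rw [this]; push_cast; ring

lemma muPt_even_mono : Monotone fun i => muPt (2 * i) := by
  intro i j h
  have : (i : ℝ) ≤ j := by exact_mod_cast h
  simp only [muPt_even]
  gcongr

lemma muPt_odd_anti : Antitone fun i => muPt (2 * i + 1) := by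
  intro i j h
  have : (i : ℝ) ≤ j := by exact_mod_cast h
  simp only [muPt_odd]
  gcongr

/-- Comparison of the skip-two differences with the variation. -/
lemma aux_sum_le (f : ℝ → ℂ) (hf : BoundedVariationOn f sigma0) :
    (Summable fun n => ‖f (muPt n) - f (muPt (n + 2))‖) ∧
    ∑' n, ‖f (muPt n) - f (muPt (n + 2))‖ ≤ 2 * (eVariationOn f sigma0).toReal := by
  have he : ∑' i, ‖f (muPt (2 * i)) - f (muPt (2 * i + 2))‖ₑ ≤ eVariationOn f sigma0 := by
    refine ENNReal.tsum_le_of_sum_range_le fun n => ?_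
    refine le_trans (le_of_eq ?_) (eVariationOn.sum_le (f := f) (n := n) muPt_even_mono
      (fun i => muPt_mem _))
    refine Finset.sum_congr rfl fun i _ => ?_
    rw [edist_comm, edist_eq_enorm_sub]; rfl
  have ho : ∑' i, ‖f (muPt (2 * i + 1)) - f (muPt (2 * i + 1 + 2))‖ₑ ≤ eVariationOn f sigma0 := by
    refine ENNReal.tsum_le_of_sum_range_le fun n => ?_
    refine le_trans ?_ (eVariationOn.comp_le_of_antitoneOn f (t := Set.univ)
      (fun i => muPt (2 * i + 1)) (muPt_odd_anti.antitoneOn _) (fun i _ => muPt_mem _))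
    refine le_trans (le_of_eq ?_) (eVariationOn.sum_le (n := n) (u := fun i : ℕ => i) monotone_id
      (fun i => Set.mem_univ _))
    refine Finset.sum_congr rfl fun i _ => ?_
    rw [edist_comm, edist_eq_enorm_sub]; rfl
  have hsum : ∑' n, ‖f (muPt n) - f (muPt (n + 2))‖ₑ ≤ 2 * eVariationOn f sigma0 := by
    rw [← tsum_even_add_odd ENNReal.summable ENNReal.summable, two_mul]
    exact add_le_add he ho
  have hfin : 2 * eVariationOn f sigma0 ≠ ⊤ := ENNReal.mul_ne_top (by simp) hf
  have hne := ne_top_of_le_ne_top hfin hsum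
  have hs := ENNReal.summable_toReal hne
  simp only [toReal_enorm] at hs
  refine ⟨hs, ?_⟩
  have := ENNReal.toReal_mono hfin hsum
  rw [ENNReal.tsum_toReal_eq (fun _ => by simp)] at this
  simpa using this

/-! ### The space and evaluation functionals -/

/-- Abbreviation for the complex `ℓ¹`. -/
noncomputable abbrev L1 := lp (fun _ : ℕ => ℂ) 1

lemma L1_summable (a : L1) : Summable fun n => ‖a n‖ := by
  have := (memℓp_gen_iff (p := 1) (by simp)).1 a.2
  simpa using this

lemma L1_norm (a : L1) : ‖a‖ = ∑' n, ‖a n‖ := by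
  simpa using lp.norm_eq_tsum_rpow (p := 1) (by simp) a

lemma L1_norm' (a : L1) : ‖a‖ = ‖a 0‖ + ∑' n, ‖a (n + 1)‖ := by
  rw [L1_norm, (L1_summable a).tsum_eq_zero_add]

lemma aux_inj (n : ℕ) : Function.Injective fun i : ℕ => n + 2 * i := by
  intro i j h; simp only at h; omega

lemma L1_summable_sub (a : L1) (n : ℕ) : Summable fun i => a (n + 2 * i + 1) :=
  Summable.of_norm
    ((L1_summable a).comp_injective (i := fun i => n + 2 * i + 1) (fun i j h => by
      simp only at h; omega))

/-- Evaluation at `muPt n`. -/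
noncomputable def ev (n : ℕ) : L1 →ₗ[ℂ] ℂ where
  toFun a := a 0 + ∑' i, a (n + 2 * i + 1)
  map_add' a b := by
    simp only [lp.coeFn_add, Pi.add_apply]
    rw [(L1_summable_sub a n).tsum_add (L1_summable_sub b n)]
    ring
  map_smul' c a := by
    simp only [lp.coeFn_smul, Pi.smul_apply, smul_eq_mul, RingHom.id_apply]
    rw [tsum_mul_left]
    ring

/-- Evaluation at zero. -/
noncomputable def ev0 : L1 →ₗ[ℂ] ℂ where
  toFun a := a 0
  map_add' a b := by simp
  map_smul' c a := by simp

lemma ev_apply (n : ℕ) (a : L1) : ev n a = a 0 + ∑' i, a (n + 2 * i + 1) := rfl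

lemma ev_tail (n : ℕ) (a : L1) : ‖ev n a - a 0‖ ≤ ∑' i, ‖a (i + n + 1)‖ := by
  have h1 : Summable fun i => ‖a (i + n + 1)‖ := by
    have := (summable_nat_add_iff (n + 1)).2 (L1_summable a)
    simpa [add_assoc] using this
  rw [ev_apply, add_sub_cancel_left]
  have h2 := (L1_summable_sub a n).norm
  refine (norm_tsum_le_tsum_norm h2).trans ?_
  have := tsum_comp_le_tsum_of_inj h1 (fun _ => norm_nonneg _) (i := fun i : ℕ => 2 * i)
    (fun i j h => by simp only at h; omega)
  refine le_trans (le_of_eq ?_) this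
  refine tsum_congr fun i => ?_
  simp [add_comm]

lemma ev_norm (n : ℕ) (a : L1) : ‖ev n a‖ ≤ ‖a‖ := by
  have h := ev_tail n a
  have h1 := (summable_nat_add_iff 1).2 (L1_summable a)
  have h2 : ∑' i, ‖a (i + n + 1)‖ ≤ ∑' i, ‖a (i + 1)‖ :=
    tsum_comp_le_tsum_of_inj h1 (fun _ => norm_nonneg _) (i := fun i : ℕ => i + n)
      (fun i j h => by simp only at h; omega)
  have h3 := norm_add_le (ev n a - a 0) (a 0)
  rw [sub_add_cancel] at h3
  rw [L1_norm']
  linarith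

lemma ev_tendsto (a : L1) : Tendsto (fun n => ev n a) atTop (𝓝 (a 0)) := by
  rw [tendsto_iff_norm_sub_tendsto_zero]
  refine squeeze_zero (fun _ => norm_nonneg _) (fun n => ev_tail n a) ?_
  have := tendsto_sum_nat_add (fun i => ‖a (i + 1)‖)
  simpa [add_assoc, add_comm, add_left_comm] using this

lemma ev_diff (n : ℕ) (a : L1) : a (n + 1) = ev n a - ev (n + 2) a := by
  rw [ev_apply, ev_apply, (L1_summable_sub a n).tsum_eq_zero_add]
  have : ∀ i, n + 2 * (i + 1) + 1 = n + 2 + 2 * i + 1 := fun i => by ring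
  simp only [this]
  simp

/-! ### The operator -/

lemma muPt_norm (n : ℕ) : ‖(muPt n : ℂ)‖ ≤ 1 := by
  rw [Complex.norm_real, Real.norm_eq_abs, abs_le]
  exact aux_sigma0_subset (muPt_mem n)

lemma muPt_tendsto : Tendsto (fun n => (muPt n : ℂ)) atTop (𝓝 0) := by
  rw [tendsto_zero_iff_norm_tendsto_zero]
  have := tendsto_one_div_add_atTop_nhds_zero_nat (𝕜 := ℝ)
  refine this.congr fun n => ?_
  unfold muPt
  rw [Complex.norm_real, norm_div, norm_pow]
  simp [Real.norm_eq_abs]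
  rw [abs_of_nonneg (by positivity)]

/-- Coordinates of the operator. -/
noncomputable def Tfun (a : L1) : ℕ → ℂ
  | 0 => 0
  | n + 1 => muPt n * ev n a - muPt (n + 2) * ev (n + 2) a

lemma aux_bound (a : L1) (f : ℝ → ℂ) (hf : BoundedVariationOn f sigma0) (M : ℝ)
    (hM : ∀ n, ‖f (muPt n)‖ ≤ M) :
    (Summable fun n => ‖f (muPt n) * ev n a - f (muPt (n + 2)) * ev (n + 2) a‖) ∧
    ∑' n, ‖f (muPt n) * ev n a - f (muPt (n + 2)) * ev (n + 2) a‖ ≤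
      M * ∑' n, ‖a (n + 1)‖ + 2 * (eVariationOn f sigma0).toReal * ‖a‖ := by
  obtain ⟨hs, hv⟩ := aux_sum_le f hf
  have h1 := (summable_nat_add_iff 1).2 (L1_summable a)
  have hle : ∀ n, ‖f (muPt n) * ev n a - f (muPt (n + 2)) * ev (n + 2) a‖ ≤
      M * ‖a (n + 1)‖ + ‖f (muPt n) - f (muPt (n + 2))‖ * ‖a‖ := by
    intro n
    have : f (muPt n) * ev n a - f (muPt (n + 2)) * ev (n + 2) a
        = f (muPt n) * a (n + 1) + (f (muPt n) - f (muPt (n + 2))) * ev (n + 2) a := by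
      rw [ev_diff]; ring
    rw [this]
    refine (norm_add_le _ _).trans ?_
    rw [norm_mul, norm_mul]
    gcongr
    · exact hM n
    · exact ev_norm _ _
  have hS := (h1.mul_left M).add (hs.mul_right ‖a‖)
  have hsum := Summable.of_nonneg_of_le (fun _ => norm_nonneg _) hle hS
  refine ⟨hsum, (hsum.tsum_le_tsum hle hS).trans ?_⟩
  rw [(h1.mul_left M).tsum_add (hs.mul_right ‖a‖), tsum_mul_left, tsum_mul_right]
  gcongr

lemma aux_bv_id : BoundedVariationOn (fun t : ℝ => (t : ℂ)) sigma0 :=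
  aux_bv_mono (g := fun t => t) monotone_id

lemma Tfun_mem (a : L1) : Memℓp (Tfun a) 1 := by
  apply memℓp_gen
  have := (aux_bound a _ aux_bv_id 1 muPt_norm).1
  simp only [ENNReal.toReal_one, Real.rpow_one]
  exact (summable_nat_add_iff 1).1 this

/-- The operator as a linear map. -/
noncomputable def Tlin : L1 →ₗ[ℂ] L1 where
  toFun a := ⟨Tfun a, Tfun_mem a⟩
  map_add' a b := by
    ext n
    cases n with
    | zero => exact (add_zero (0 : ℂ)).symm
    | succ n =>
      change (muPt n : ℂ) * ev n (a + b) - muPt (n + 2) * ev (n + 2) (a + b)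
        = (muPt n * ev n a - muPt (n + 2) * ev (n + 2) a)
          + (muPt n * ev n b - muPt (n + 2) * ev (n + 2) b)
      rw [map_add, map_add]; ring
  map_smul' c a := by
    ext n
    cases n with
    | zero => simp [Tfun]
    | succ n => simp [Tfun]; ring

lemma Tlin_zero (a : L1) : Tlin a 0 = 0 := rfl

lemma Tlin_succ (a : L1) (n : ℕ) :
    Tlin a (n + 1) = muPt n * ev n a - muPt (n + 2) * ev (n + 2) a := rfl

/-- The operator. -/
noncomputable def Top1 : L1 →L[ℂ] L1 :=
  Tlin.mkContinuous (1 + 2 * (eVariationOn (fun t : ℝ => (t : ℂ)) sigma0).toReal) (by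
    intro a
    have h := (aux_bound a _ aux_bv_id 1 muPt_norm).2
    rw [L1_norm' (Tlin a), Tlin_zero, norm_zero, zero_add]
    simp only [Tlin_succ]
    have h2 := L1_norm' a
    have h3 := norm_nonneg (a 0)
    refine h.trans ?_
    linarith)

lemma Top1_apply (a : L1) : Top1 a = Tlin a := rfl

lemma ev_Top1 (n : ℕ) (a : L1) : ev n (Top1 a) = muPt n * ev n a := by
  rw [ev_apply, Top1_apply, Tlin_zero, zero_add]
  have hs := (L1_summable_sub (Tlin a) n).hasSum.tendsto_sum_nat
  refine tendsto_nhds_unique hs ?_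
  have hE : ∀ N, ∑ i ∈ Finset.range N, Tlin a (n + 2 * i + 1)
      = muPt n * ev n a - muPt (n + 2 * N) * ev (n + 2 * N) a := by
    intro N
    induction N with
    | zero => simp
    | succ N ih =>
      rw [Finset.sum_range_succ, ih, Tlin_succ, show n + 2 * (N + 1) = n + 2 * N + 2 by ring]
      ring
  simp only [hE]
  have ht : Tendsto (fun N : ℕ => n + 2 * N) atTop atTop :=
    tendsto_atTop_mono (fun N => by simp only [id]; omega) tendsto_id
  have := (muPt_tendsto.comp ht).mul ((ev_tendsto a).comp ht)
  simpa using this.const_sub ((muPt n : ℂ) * ev n a)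

lemma ev_aeval (φ : L1 →ₗ[ℂ] ℂ) (c : ℂ) (h : ∀ a, φ (Top1 a) = c * φ a) (p : Polynomial ℂ)
    (a : L1) : φ ((Polynomial.aeval Top1 p : L1 →L[ℂ] L1) a) = p.eval c * φ a := by
  induction p using Polynomial.induction_on generalizing a with
  | C b => simp [Algebra.algebraMap_eq_smul_one]
  | add p q hp hq => simp [hp, hq, add_mul]
  | monomial n b ih =>
    have : (Polynomial.C b * Polynomial.X ^ (n + 1) : Polynomial ℂ)
      = (Polynomial.C b * Polynomial.X ^ n) * Polynomial.X := by ring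
    rw [this, map_mul, Polynomial.aeval_X, ContinuousLinearMap.mul_apply, ih, h]
    rw [Polynomial.eval_mul (p := Polynomial.C b * Polynomial.X ^ n), Polynomial.eval_X]
    ring

lemma Top1_poly_bound (p : Polynomial ℂ) :
    ‖(Polynomial.aeval Top1 p : L1 →L[ℂ] L1)‖ ≤
      2 * bvNorm sigma0 (fun t : ℝ => p.eval (t : ℂ)) := by
  set f : ℝ → ℂ := fun t => p.eval (t : ℂ) with hf
  set M := sSup ((fun t => ‖f t‖) '' sigma0) with hMdef
  have hcont : Continuous fun t => ‖f t‖ := by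
    simp only [hf]; fun_prop
  have hbdd : BddAbove ((fun t => ‖f t‖) '' sigma0) :=
    (sigma0_isCompact.image hcont).bddAbove
  have hM : ∀ t ∈ sigma0, ‖f t‖ ≤ M := fun t ht => le_csSup hbdd ⟨t, ht, rfl⟩
  have hM0 : 0 ≤ M := (norm_nonneg _).trans (hM 0 zero_mem_sigma0)
  have hV0 : 0 ≤ (eVariationOn f sigma0).toReal := ENNReal.toReal_nonneg
  have hb : bvNorm sigma0 f = M + (eVariationOn f sigma0).toReal := rfl
  rw [hb]
  refine ContinuousLinearMap.opNorm_le_bound _ (by positivity) fun a => ?_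
  set b : L1 := (Polynomial.aeval Top1 p : L1 →L[ℂ] L1) a with hbdef
  have hev : ∀ n, ev n b = f (muPt n) * ev n a := fun n =>
    ev_aeval (ev n) _ (ev_Top1 n) p a
  have hev0 : b 0 = f 0 * a 0 := by
    have := ev_aeval ev0 0 (fun a => by rw [zero_mul]; exact Tlin_zero a) p a
    rw [hf]; simp only [Complex.ofReal_zero]
    exact this
  have h := (aux_bound a f (aux_bv_poly p) M (fun n => hM _ (muPt_mem n))).2
  rw [L1_norm' b, hev0, norm_mul]
  have hb' : ∀ n, b (n + 1) = f (muPt n) * ev n a - f (muPt (n + 2)) * ev (n + 2) a := by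
    intro n; rw [ev_diff, hev, hev]
  simp only [hb']
  have h2 := L1_norm' a
  have h3 : ‖f 0‖ * ‖a 0‖ ≤ M * ‖a 0‖ := by
    gcongr; exact hM 0 zero_mem_sigma0
  have h4 : 0 ≤ M * ‖a‖ := by positivity
  have h5 : M * ‖a‖ = M * ‖a 0‖ + M * ∑' n, ‖a (n + 1)‖ := by rw [h2]; ring
  linarith

/-! ### Non-extendability -/

/-- The Heaviside function. -/
noncomputable def heav (t : ℝ) : ℝ := if 0 < t then 1 else 0

lemma heav_mono : Monotone heav := by
  intro s t h
  unfold heav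
  split_ifs <;> linarith

lemma heav_factor (l : ℝ) (hl : l ≠ 0) : ∃ k : ℝ → ℂ, BoundedVariationOn k sigma0 ∧
    ∀ t : ℝ, (heav t : ℂ) = heav l + ((t : ℂ) - l) * k t := by
  rcases lt_or_gt_of_ne hl with h | h
  · -- negative point
    have hm : Monotone fun t : ℝ => - (1 / (max t 0 - l)) := by
      intro s t hst
      have h1 : 0 < max s 0 - l := by have := le_max_right s 0; linarith
      have h2 : max s 0 ≤ max t 0 := max_le_max_right 0 hst
      simp only [neg_le_neg_iff]
      exact one_div_le_one_div_of_le h1 (by linarith)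
    refine ⟨fun t => (-1) * ((heav t : ℂ) * ((- (1 / (max t 0 - l)) : ℝ) : ℂ)),
      aux_bv_mul (aux_bv_const _ _) (aux_bv_mul (aux_bv_mono heav_mono) (aux_bv_mono hm)), ?_⟩
    intro t
    have hl0 : heav l = 0 := by simp [heav, h.le]
    rw [hl0]
    by_cases ht : 0 < t
    · have h1 : heav t = 1 := by simp [heav, ht]
      have hne : (t : ℂ) - l ≠ 0 := by
        rw [← Complex.ofReal_sub, Complex.ofReal_ne_zero]; linarith
      simp only []
      rw [h1, max_eq_left ht.le]
      push_cast
      field_simp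
      ring
    · have h1 : heav t = 0 := by simp [heav, ht]
      simp [h1]
  · have hm : Monotone fun t : ℝ => 1 / (l - min t 0) := by
      intro s t hst
      have h1 : 0 < l - min t 0 := by have := min_le_right t 0; linarith
      have h2 : min s 0 ≤ min t 0 := min_le_min_right 0 hst
      exact one_div_le_one_div_of_le h1 (by linarith)
    refine ⟨fun t => (1 + (-1) * (heav t : ℂ)) * ((1 / (l - min t 0) : ℝ) : ℂ),
      aux_bv_mul (aux_bv_add (aux_bv_const _ _) (aux_bv_mul (aux_bv_const _ _)
        (aux_bv_mono heav_mono))) (aux_bv_mono hm), ?_⟩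
    intro t
    have hl0 : heav l = 1 := by simp [heav, h]
    rw [hl0]
    by_cases ht : 0 < t
    · have h1 : heav t = 1 := by simp [heav, ht]
      simp [h1]
    · have h1 : heav t = 0 := by simp [heav, ht]
      have hne : (l : ℂ) - t ≠ 0 := by
        rw [← Complex.ofReal_sub, Complex.ofReal_ne_zero]; push Not at ht; linarith
      simp only []
      rw [h1, min_eq_left (not_lt.1 ht)]
      push_cast
      field_simp
      ring

lemma muPt_ne (n : ℕ) : muPt n ≠ 0 := by
  unfold muPt
  exact div_ne_zero (pow_ne_zero _ (by norm_num)) (by positivity)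

lemma Top1_no_ext : ¬ HasBVExtension sigma0 Top1 := by
  rintro ⟨C', -, Ψ, hΨ, -, hp⟩
  set χ : ℝ → ℂ := fun t => (heav t : ℂ) with hχ
  have key : ∀ n (a : L1), ev n (Ψ χ a) = heav (muPt n) * ev n a := by
    intro n a
    obtain ⟨k, hk, hkt⟩ := heav_factor (muPt n) (muPt_ne n)
    let p : Polynomial ℂ := Polynomial.X - Polynomial.C (muPt n : ℂ)
    let q : Polynomial ℂ := Polynomial.C (heav (muPt n) : ℂ)
    have hdec : χ = (fun t : ℝ => q.eval (t : ℂ)) + (fun t : ℝ => p.eval (t : ℂ)) * k := by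
      ext t
      simp [p, q, hχ, hkt t]
    rw [hdec, (hΨ _ ((fun t : ℝ => p.eval (t : ℂ)) * k) (aux_bv_poly q) (aux_bv_mul (aux_bv_poly p) hk)).1,
      (hΨ _ _ (aux_bv_poly p) hk).2, hp, hp, ContinuousLinearMap.add_apply,
      ContinuousLinearMap.comp_apply, map_add, ev_aeval (ev n) _ (ev_Top1 n),
      ev_aeval (ev n) _ (ev_Top1 n)]
    simp [p, q]
  let e : L1 := lp.single 1 0 (1 : ℂ)
  have he : ∀ n, ev n e = 1 := by
    intro n
    rw [ev_apply]
    have : ∀ i, e (n + 2 * i + 1) = 0 := fun i => by simp [e, lp.single_apply]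
    simp only [this]
    simp [e]
  have hlim := ev_tendsto (Ψ χ e)
  simp only [key, he, mul_one] at hlim
  have t1 : Tendsto (fun N : ℕ => 2 * N) atTop atTop :=
    tendsto_atTop_mono (fun N => by simp only [id]; omega) tendsto_id
  have t2 : Tendsto (fun N : ℕ => 2 * N + 1) atTop atTop :=
    tendsto_atTop_mono (fun N => by simp only [id]; omega) tendsto_id
  have l1 := hlim.comp t1
  have l2 := hlim.comp t2
  have e1 : ((fun n => (heav (muPt n) : ℂ)) ∘ fun N : ℕ => 2 * N) = fun _ => 0 := by
    ext N
    have : muPt (2 * N) ≤ 0 := by rw [muPt_even]; simp; positivity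
    simp [heav, this]
  have e2 : ((fun n => (heav (muPt n) : ℂ)) ∘ fun N : ℕ => 2 * N + 1) = fun _ => 1 := by
    ext N
    have : 0 < muPt (2 * N + 1) := by rw [muPt_odd]; positivity
    simp [heav, this]
  rw [e1] at l1
  rw [e2] at l2
  have a1 := tendsto_nhds_unique l1 tendsto_const_nhds
  have a2 := tendsto_nhds_unique l2 tendsto_const_nhds
  rw [a1] at a2
  exact zero_ne_one a2

/-- There exist a bounded linear operator `T` on `ℓ¹` and a constant `C > 0`
such that `‖p(T)‖ ≤ C·(sup_{t∈σ₀}|p(t)| + var_{σ₀}(p))` for every complex polynomial `p`, yet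
there is no `BV(σ₀)` extension of the polynomial calculus of `T`. -/
theorem stmt5 :
    ∃ (T : lp (fun _ : ℕ => ℂ) 1 →L[ℂ] lp (fun _ : ℕ => ℂ) 1) (C : ℝ), 0 < C ∧
      (∀ p : Polynomial ℂ,
        ‖(Polynomial.aeval T p : lp (fun _ : ℕ => ℂ) 1 →L[ℂ] lp (fun _ : ℕ => ℂ) 1)‖ ≤
          C * bvNorm sigma0 (fun t : ℝ => p.eval (t : ℂ))) ∧
      ¬ HasBVExtension sigma0 T := by
  exact ⟨Top1, 2, by norm_num, Top1_poly_bound, Top1_no_ext⟩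
end

section
/- Let σ ⊆ ℝ be a nonempty compact set, X a complex Banach space, T a bounded operator on X, and C₀ > 0 a constant with ‖p(T)‖ ≤ C₀·(sup_{t∈σ}|p(t)| + var_σ(p)) for every polynomial p with complex coefficients, and suppose that no BV(σ) extension of the polynomial calculus of T exists. Let Y be a complex Banach space that contains a complemented closed subspace isomorphic (as a Banach space) to X; that is, Y = X₁ ⊕ Z for closed subspaces X₁, Z of Y with X₁ isomorphic to X. Set ω = 1 + max σ and σ' = σ ∪ {ω}. Then there exist a bounded operator T' on Y (namely, the operator acting as a conjugate of T on X₁ and as ω times the identity on Z) and a constant C₁ > 0 such that ‖p(T')‖ ≤ C₁·(sup_{t∈σ'}|p(t)| + var_{σ'}(p)) for every polynomial p with complex coefficients, yet no BV(σ') extension of the polynomial calculus of T' exists. -/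
open MeasureTheory Filter Topology

namespace Stmt6Aux

lemma poly_bv (σ : Set ℝ) (hσ : IsCompact σ) (p : Polynomial ℂ) :
    BoundedVariationOn (fun t : ℝ => p.eval (t : ℂ)) σ := by
  rcases σ.eq_empty_or_nonempty with h | h
  · subst h
    exact BoundedVariationOn.of_subsingleton Set.subsingleton_empty
  have hsub : σ ⊆ Set.Icc (sInf σ) (sSup σ) := fun t ht =>
    ⟨(hσ.isLeast_sInf h).2 ht, (hσ.isGreatest_sSup h).2 ht⟩
  refine BoundedVariationOn.mono ?_ hsub
  have hc : ContDiff ℝ 1 (fun t : ℝ => p.eval (t : ℂ)) := by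
    have h1 : ContDiff ℂ 1 (fun z : ℂ => p.eval z) := by
      simpa using p.contDiff_aeval (𝕜 := ℂ) (R := ℂ) 1
    exact (h1.restrict_scalars ℝ).comp Complex.ofRealCLM.contDiff
  obtain ⟨K, hK⟩ := (hc.locallyLipschitz.locallyLipschitzOn
    (s := Set.Icc (sInf σ) (sSup σ))).exists_lipschitzOnWith_of_compact isCompact_Icc
  exact hK.comp_boundedVariationOn (g := id) (fun _ h => h) (BoundedVariationOn.id_Icc _ _)

lemma bdd_of_bv {σ : Set ℝ} {f : ℝ → ℂ} (hf : BoundedVariationOn f σ) :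
    BddAbove ((fun t => ‖f t‖) '' σ) := by
  rcases σ.eq_empty_or_nonempty with h | ⟨m, hm⟩
  · simp [h]
  refine ⟨(eVariationOn f σ).toReal + ‖f m‖, ?_⟩
  rintro _ ⟨t, ht, rfl⟩
  have h1 := hf.dist_le ht hm
  rw [dist_eq_norm] at h1
  have h2 := norm_sub_norm_le (f t) (f m)
  simp only
  linarith

lemma norm_le_bvNorm {σ : Set ℝ} {f : ℝ → ℂ} (hf : BoundedVariationOn f σ) {t : ℝ}
    (ht : t ∈ σ) : ‖f t‖ ≤ bvNorm σ f := by
  have h1 : ‖f t‖ ≤ sSup ((fun t => ‖f t‖) '' σ) :=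
    le_csSup (bdd_of_bv hf) ⟨t, ht, rfl⟩
  have h2 : 0 ≤ (eVariationOn f σ).toReal := ENNReal.toReal_nonneg
  unfold bvNorm
  linarith

lemma bvNorm_mono {σ τ : Set ℝ} (hne : σ.Nonempty) (h : σ ⊆ τ) {f : ℝ → ℂ}
    (hf : BoundedVariationOn f τ) : bvNorm σ f ≤ bvNorm τ f := by
  unfold bvNorm
  refine add_le_add ?_ ?_
  · exact csSup_le_csSup (bdd_of_bv hf) (hne.image _) (Set.image_mono h)
  · exact ENNReal.toReal_mono hf (eVariationOn.mono f h)

lemma eVar_union {σ : Set ℝ} {m ω : ℝ} (hm : IsGreatest σ m) (hmω : m ≤ ω) (f : ℝ → ℂ) :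
    eVariationOn f (σ ∪ {ω}) = eVariationOn f σ + edist (f m) (f ω) := by
  rw [eVariationOn.union' f hm (isLeast_singleton (a := ω)) hmω,
    eVariationOn.subsingleton f Set.subsingleton_singleton, add_zero]

lemma bv_union {σ : Set ℝ} {m ω : ℝ} (hm : IsGreatest σ m) (hmω : m ≤ ω) {f : ℝ → ℂ}
    (hf : BoundedVariationOn f σ) : BoundedVariationOn f (σ ∪ {ω}) := by
  unfold BoundedVariationOn at *
  rw [eVar_union hm hmω]
  exact ENNReal.add_ne_top.2 ⟨hf, edist_ne_top _ _⟩

/-- set the value at `ω` to zero -/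
noncomputable def kill (ω : ℝ) (f : ℝ → ℂ) : ℝ → ℂ := fun t => if t = ω then 0 else f t

lemma kill_eqOn {σ : Set ℝ} {ω : ℝ} (hω : ω ∉ σ) (f : ℝ → ℂ) : Set.EqOn (kill ω f) f σ := by
  intro t ht
  have : t ≠ ω := fun h => hω (h ▸ ht)
  simp [kill, this]

lemma kill_bv {σ : Set ℝ} {m ω : ℝ} (hm : IsGreatest σ m) (hmω : m < ω) {f : ℝ → ℂ}
    (hf : BoundedVariationOn f σ) : BoundedVariationOn (kill ω f) (σ ∪ {ω}) := by
  have hω : ω ∉ σ := fun h => absurd (hm.2 h) (not_le.2 hmω)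
  refine bv_union hm hmω.le ?_
  unfold BoundedVariationOn at *
  rwa [eVariationOn.congr (kill_eqOn hω f)]

lemma kill_bvNorm {σ : Set ℝ} {m ω : ℝ} (hm : IsGreatest σ m) (hmω : m < ω) {f : ℝ → ℂ}
    (hf : BoundedVariationOn f σ) : bvNorm (σ ∪ {ω}) (kill ω f) ≤ 2 * bvNorm σ f := by
  have hω : ω ∉ σ := fun h => absurd (hm.2 h) (not_le.2 hmω)
  have hS : ∀ t ∈ σ, ‖f t‖ ≤ sSup ((fun t => ‖f t‖) '' σ) := fun t ht =>
    le_csSup (bdd_of_bv hf) ⟨t, ht, rfl⟩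
  have hS0 : 0 ≤ sSup ((fun t => ‖f t‖) '' σ) := (norm_nonneg _).trans (hS m hm.1)
  have h1 : sSup ((fun t => ‖kill ω f t‖) '' (σ ∪ {ω})) ≤ sSup ((fun t => ‖f t‖) '' σ) := by
    refine csSup_le ⟨_, ω, by simp, rfl⟩ ?_
    rintro _ ⟨t, ht | ht, rfl⟩
    · simp only [kill_eqOn hω f ht]
      exact hS t ht
    · have : t = ω := ht
      simpa [kill, this] using hS0
  have h2 : (eVariationOn (kill ω f) (σ ∪ {ω})).toReal = (eVariationOn f σ).toReal + ‖f m‖ := by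
    rw [eVar_union hm hmω.le, eVariationOn.congr (kill_eqOn hω f),
      ENNReal.toReal_add hf (edist_ne_top _ _), kill_eqOn hω f hm.1]
    simp [kill]
  have h3 := hS m hm.1
  have h4 : 0 ≤ (eVariationOn f σ).toReal := ENNReal.toReal_nonneg
  unfold bvNorm
  rw [h2]
  linarith

lemma aeval_eig {X : Type*} [NormedAddCommGroup X] [NormedSpace ℂ X]
    (T : X →L[ℂ] X) (μ : ℂ) (x : X) (h : T x = μ • x) (p : Polynomial ℂ) :
    (Polynomial.aeval T p : X →L[ℂ] X) x = p.eval μ • x := by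
  induction p using Polynomial.induction_on' with
  | add p q hp hq => simp [hp, hq, add_smul]
  | monomial n a =>
    have hn : (T ^ n) x = μ ^ n • x := by
      induction n with
      | zero => simp
      | succ n ih => rw [pow_succ, mul_apply_eq_comp, h, map_smul, ih, smul_smul,
          pow_succ']
    simp [Polynomial.aeval_monomial, Algebra.algebraMap_eq_smul_one, hn, smul_smul]

lemma aeval_inter {X Y : Type*} [NormedAddCommGroup X] [NormedSpace ℂ X]
    [NormedAddCommGroup Y] [NormedSpace ℂ Y]
    (T : X →L[ℂ] X) (S : Y →L[ℂ] Y) (J : X →L[ℂ] Y) (h : ∀ x, S (J x) = J (T x))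
    (p : Polynomial ℂ) (x : X) :
    (Polynomial.aeval S p : Y →L[ℂ] Y) (J x) = J ((Polynomial.aeval T p : X →L[ℂ] X) x) := by
  induction p using Polynomial.induction_on' generalizing x with
  | add p q hp hq => simp [hp, hq]
  | monomial n a =>
    have hn : ∀ x, (S ^ n) (J x) = J ((T ^ n) x) := by
      induction n with
      | zero => simp
      | succ n ih =>
        intro x
        rw [pow_succ, mul_apply_eq_comp, h, ih, pow_succ,
          mul_apply_eq_comp]
    simp [Polynomial.aeval_monomial, Algebra.algebraMap_eq_smul_one, hn]

lemma no_eig {X : Type*} [NormedAddCommGroup X] [NormedSpace ℂ X]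
    (σ : Set ℝ) (T : X →L[ℂ] X) (C₀ : ℝ) (hC₀ : 0 < C₀)
    (hbound : ∀ p : Polynomial ℂ,
      ‖(Polynomial.aeval T p : X →L[ℂ] X)‖ ≤ C₀ * bvNorm σ (fun t : ℝ => p.eval (t : ℂ)))
    {a m ω : ℝ} (ha : IsLeast σ a) (hm : IsGreatest σ m) (hmω : m < ω)
    (x : X) (hx : T x = (ω : ℂ) • x) : x = 0 := by
  have ham : a ≤ m := ha.2 hm.1
  have hpos : 0 < ω - a := by linarith
  set r : ℝ := (m - a) / (ω - a) with hr
  have hr0 : 0 ≤ r := div_nonneg (by linarith) hpos.le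
  have hr1 : r < 1 := by rw [hr, div_lt_one hpos]; linarith
  have key : ∀ n : ℕ, ‖x‖ ≤ C₀ * (2 * r ^ n) * ‖x‖ := by
    intro n
    set p : Polynomial ℂ :=
      (Polynomial.C ((1 / (ω - a) : ℝ) : ℂ) * (Polynomial.X - Polynomial.C (a : ℂ))) ^ n with hp
    let g : ℝ → ℝ := fun t => ((t - a) / (ω - a)) ^ n
    have hpg : (fun t : ℝ => p.eval (t : ℂ)) = Complex.ofReal ∘ g := by
      funext t
      simp [hp, g]
      ring
    have hpω : p.eval (ω : ℂ) = 1 := by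
      have := congrFun hpg ω
      simp only [Function.comp, g] at this
      rw [this, div_self hpos.ne']
      simp
    have h0 : ∀ t ∈ σ, 0 ≤ (t - a) / (ω - a) := fun t ht =>
      div_nonneg (by linarith [ha.2 ht]) hpos.le
    have hmono : MonotoneOn g σ := by
      intro s hs t ht hst
      have := h0 s hs
      simp only [g]
      gcongr
    have hvar : (eVariationOn (Complex.ofReal ∘ g) σ).toReal ≤ r ^ n := by
      have e1 : eVariationOn (Complex.ofReal ∘ g) σ ≤ eVariationOn g σ := by
        have := (Complex.isometry_ofReal.lipschitz.lipschitzOnWith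
          (s := Set.univ)).comp_eVariationOn_le (g := g) (s := σ) (Set.mapsTo_univ _ _)
        simpa using this
      have e2 : eVariationOn g σ ≤ ENNReal.ofReal (g m - g a) := by
        have := (hmono.eVariationOn_eq ha.1 hm.1).le
        have hi : σ ∩ Set.Icc a m = σ :=
          Set.inter_eq_left.2 (fun t ht => ⟨ha.2 ht, hm.2 ht⟩)
        rwa [hi] at this
      have e3 : g m - g a ≤ r ^ n := by
        have : 0 ≤ g a := pow_nonneg (h0 a ha.1) n
        have h' : g m = r ^ n := rfl
        linarith
      refine ENNReal.toReal_le_of_le_ofReal (pow_nonneg hr0 n) ?_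
      exact (e1.trans e2).trans (ENNReal.ofReal_le_ofReal e3)
    have hsup : sSup ((fun t => ‖(Complex.ofReal ∘ g) t‖) '' σ) ≤ r ^ n := by
      refine csSup_le ⟨_, m, hm.1, rfl⟩ ?_
      rintro _ ⟨t, ht, rfl⟩
      have : 0 ≤ g t := pow_nonneg (h0 t ht) n
      simp only [Function.comp, Complex.norm_real, Real.norm_eq_abs, abs_of_nonneg this]
      exact hmono ht hm.1 (hm.2 ht)
    have hb := hbound p
    rw [hpg] at hb
    have hbv : bvNorm σ (Complex.ofReal ∘ g) ≤ 2 * r ^ n := by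
      unfold bvNorm; linarith
    have h2 := (Polynomial.aeval T p : X →L[ℂ] X).le_opNorm x
    rw [aeval_eig T ω x hx, hpω, one_smul] at h2
    refine h2.trans ?_
    gcongr
    exact hb.trans (by gcongr)
  have hlim : Tendsto (fun n : ℕ => C₀ * (2 * r ^ n) * ‖x‖) atTop (𝓝 (C₀ * (2 * 0) * ‖x‖)) :=
    (((tendsto_pow_atTop_nhds_zero_of_lt_one hr0 hr1).const_mul 2).const_mul C₀).mul_const _
  have := ge_of_tendsto' hlim key
  simpa using this

end Stmt6Aux

open Stmt6Aux

/-- Suppose `T` is a bounded operator on the complex Banach space `X` with a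
polynomially bounded `AC(σ)`-type calculus (bound `C₀`) on a nonempty compact `σ ⊆ ℝ`, but with
no `BV(σ)` extension of its polynomial calculus.  If the Banach space `Y` contains a
complemented closed subspace `X₁` isomorphic to `X`, say `Y = X₁ ⊕ Z`, then with
`ω = 1 + max σ` and `σ' = σ ∪ {ω}` there are a bounded operator `T'` on `Y` (namely the one
acting as a conjugate of `T` on `X₁` and as `ω` times the identity on `Z`) and a constant
`C₁ > 0` such that `‖p(T')‖ ≤ C₁·(sup_{t∈σ'}|p(t)| + var_{σ'}(p))` for every polynomial `p`,
yet no `BV(σ')` extension of the polynomial calculus of `T'` exists. -/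
theorem stmt6 {X Y : Type*}
    [NormedAddCommGroup X] [NormedSpace ℂ X] [CompleteSpace X]
    [NormedAddCommGroup Y] [NormedSpace ℂ Y] [CompleteSpace Y]
    (σ : Set ℝ) (hσ : IsCompact σ) (hσne : σ.Nonempty)
    (T : X →L[ℂ] X) (C₀ : ℝ) (hC₀ : 0 < C₀)
    (hbound : ∀ p : Polynomial ℂ,
      ‖(Polynomial.aeval T p : X →L[ℂ] X)‖ ≤ C₀ * bvNorm σ (fun t : ℝ => p.eval (t : ℂ)))
    (hnoext : ¬ HasBVExtension σ T)
    (X₁ Z : Submodule ℂ Y) (hX₁ : IsClosed (X₁ : Set Y)) (hZ : IsClosed (Z : Set Y))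
    (hcompl : IsCompl X₁ Z) (e : X ≃L[ℂ] ↥X₁)
    (ω : ℝ) (hω : ω = 1 + sSup σ) (σ' : Set ℝ) (hσ' : σ' = σ ∪ {ω}) :
    ∃ T' : Y →L[ℂ] Y,
      (∀ x : X, T' ↑(e x) = ↑(e (T x))) ∧
      (∀ z : Y, z ∈ Z → T' z = (ω : ℂ) • z) ∧
      ∃ C₁ : ℝ, 0 < C₁ ∧
        (∀ p : Polynomial ℂ,
          ‖(Polynomial.aeval T' p : Y →L[ℂ] Y)‖ ≤
            C₁ * bvNorm σ' (fun t : ℝ => p.eval (t : ℂ))) ∧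
        ¬ HasBVExtension σ' T' := by
  have hm : IsGreatest σ (sSup σ) := hσ.isGreatest_sSup hσne
  have ha : IsLeast σ (sInf σ) := hσ.isLeast_sInf hσne
  have hmω : sSup σ < ω := by linarith
  subst hσ'
  have htop := Submodule.IsCompl.isTopCompl_of_isClosed hcompl hX₁ hZ
  let J : X →L[ℂ] Y := X₁.subtypeL.comp (e : X →L[ℂ] X₁)
  let R : Y →L[ℂ] X := (e.symm : X₁ →L[ℂ] X).comp (X₁.projectionOntoL Z htop)
  have hJ : ∀ x, J x = (e x : Y) := fun x => rfl
  have hRJ : ∀ x, R (J x) = x := fun x => by simp [R, J]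
  have hRZ : ∀ y, R y = 0 ↔ y ∈ Z := fun y => by
    simp [R, Submodule.projectionOntoL_apply_eq_zero_iff]
  let T' : Y →L[ℂ] Y := J.comp (T.comp R) + (ω : ℂ) • (ContinuousLinearMap.id ℂ Y - J.comp R)
  have hT' : ∀ y, T' y = J (T (R y)) + (ω : ℂ) • (y - J (R y)) := fun y => by simp [T']
  have hT'J : ∀ x, T' (J x) = J (T x) := fun x => by simp [hT', hRJ]
  have hT'Z : ∀ y, R y = 0 → T' y = (ω : ℂ) • y := fun y hy => by simp [hT', hy]
  have hRT' : ∀ y, R (T' y) = T (R y) := fun y => by simp [hT', hRJ]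
  have hker : ∀ y, T' y = (ω : ℂ) • y → R y = 0 := fun y hy => by
    refine no_eig σ T C₀ hC₀ hbound ha hm hmω _ ?_
    rw [← hRT', hy, map_smul]
  refine ⟨T', hT'J, fun z hz => hT'Z z ((hRZ z).2 hz), ?_⟩
  have hσc : IsCompact (σ ∪ {ω}) := hσ.union isCompact_singleton
  let Q : Y →L[ℂ] Y := ContinuousLinearMap.id ℂ Y - J.comp R
  have hQ : ∀ y, Q y = y - J (R y) := fun y => by simp [Q]
  have hQR : ∀ y, R (Q y) = 0 := fun y => by simp [hQ, hRJ]
  have hform : ∀ p : Polynomial ℂ, (Polynomial.aeval T' p : Y →L[ℂ] Y) =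
      J.comp ((Polynomial.aeval T p : X →L[ℂ] X).comp R) + p.eval (ω : ℂ) • Q := by
    intro p
    ext y
    have hy : y = J (R y) + Q y := by simp [hQ]
    conv_lhs => rw [hy, map_add, aeval_inter T T' J hT'J,
      aeval_eig T' ω (Q y) (hT'Z _ (hQR y))]
    simp
  refine ⟨‖J‖ * C₀ * ‖R‖ + ‖Q‖ + 1, by positivity, ?_, ?_⟩
  · intro p
    have hbv := poly_bv (σ ∪ {ω}) hσc p
    have h1 : ‖p.eval (ω : ℂ)‖ ≤ bvNorm (σ ∪ {ω}) (fun t : ℝ => p.eval (t : ℂ)) :=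
      norm_le_bvNorm hbv (t := ω) (by simp)
    have h2 := (hbound p).trans
      (mul_le_mul_of_nonneg_left (bvNorm_mono hσne Set.subset_union_left hbv) hC₀.le)
    set B := bvNorm (σ ∪ {ω}) (fun t : ℝ => p.eval (t : ℂ))
    have hB : 0 ≤ B := (norm_nonneg _).trans h1
    rw [hform]
    calc _ ≤ ‖J‖ * (‖(Polynomial.aeval T p : X →L[ℂ] X)‖ * ‖R‖) + ‖p.eval (ω : ℂ)‖ * ‖Q‖ := by
          refine (norm_add_le _ _).trans (add_le_add ?_ (le_of_eq (norm_smul _ _)))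
          refine (ContinuousLinearMap.opNorm_comp_le _ _).trans ?_
          gcongr
          exact ContinuousLinearMap.opNorm_comp_le _ _
      _ ≤ ‖J‖ * (C₀ * B * ‖R‖) + B * ‖Q‖ := by gcongr
      _ ≤ _ := by nlinarith
  · rintro ⟨C', hC', Ψ, hhom, hnorm, hpoly⟩
    apply hnoext
    have hX : Ψ (fun t : ℝ => (t : ℂ)) = T' := by simpa using hpoly Polynomial.X
    have hXbv : BoundedVariationOn (fun t : ℝ => (t : ℂ)) (σ ∪ {ω}) := by
      simpa using poly_bv (σ ∪ {ω}) hσc Polynomial.X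
    -- the calculus commutes with `T'`, hence preserves the kernel of `R`
    have hcomm : ∀ f, BoundedVariationOn f (σ ∪ {ω}) → ∀ y, T' (Ψ f y) = Ψ f (T' y) := by
      intro f hf y
      have e1 := (hhom _ f hXbv hf).2
      have e2 := (hhom f _ hf hXbv).2
      rw [mul_comm, e1, hX] at e2
      exact congrArg (fun A : Y →L[ℂ] Y => A y) e2
    have hpres : ∀ f, BoundedVariationOn f (σ ∪ {ω}) → ∀ y, R y = 0 → R (Ψ f y) = 0 := by
      intro f hf y hy
      apply hker
      rw [hcomm f hf, hT'Z y hy, map_smul]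
    have hfac : ∀ f, BoundedVariationOn f (σ ∪ {ω}) → ∀ y, R (Ψ f y) = R (Ψ f (J (R y))) := by
      intro f hf y
      have := hpres f hf (Q y) (hQR y)
      rw [hQ, map_sub, map_sub, sub_eq_zero] at this
      exact this
    refine ⟨‖R‖ * (C' * 2) * ‖J‖ + 1, by positivity,
      fun f => R.comp ((Ψ (kill ω f)).comp J), ?_, ?_, ?_⟩
    · intro f g hf hg
      have hf' := kill_bv hm hmω hf
      have hg' := kill_bv hm hmω hg
      have h := hhom _ _ hf' hg'
      have ea : kill ω (f + g) = kill ω f + kill ω g := by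
        funext t; by_cases ht : t = ω <;> simp [kill, ht]
      have em : kill ω (f * g) = kill ω f * kill ω g := by
        funext t; by_cases ht : t = ω <;> simp [kill, ht]
      refine ⟨?_, ?_⟩
      · beta_reduce; rw [ea, h.1]; ext x; simp
      · beta_reduce; rw [em, h.2]; ext x
        simpa using hfac _ hf' (Ψ (kill ω g) (J x))
    · intro f hf
      have hf' := kill_bv hm hmω hf
      have h1 := (hnorm _ hf').trans
        (mul_le_mul_of_nonneg_left (kill_bvNorm hm hmω hf) hC'.le)
      have hB : 0 ≤ bvNorm σ f := (norm_nonneg _).trans (norm_le_bvNorm hf hm.1)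
      calc _ ≤ ‖R‖ * (‖Ψ (kill ω f)‖ * ‖J‖) := by
            refine (ContinuousLinearMap.opNorm_comp_le _ _).trans ?_
            gcongr
            exact ContinuousLinearMap.opNorm_comp_le _ _
        _ ≤ ‖R‖ * (C' * (2 * bvNorm σ f) * ‖J‖) := by gcongr
        _ ≤ _ := by nlinarith
    · intro p
      set P : ℝ → ℂ := fun t : ℝ => p.eval (t : ℂ) with hP
      let δ : ℝ → ℂ := fun t => if t = ω then P ω else 0
      have hPbv : BoundedVariationOn P σ := poly_bv σ hσ p
      have hk := kill_bv hm hmω hPbv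
      have hωσ : ω ∉ σ := fun h => absurd (hm.2 h) (not_le.2 hmω)
      have hδ : BoundedVariationOn δ (σ ∪ {ω}) := by
        refine bv_union hm hmω.le ?_
        have : Set.EqOn δ (fun _ => 0) σ := by
          intro t ht
          have : t ≠ ω := fun h => hωσ (h ▸ ht)
          simp [δ, this]
        unfold BoundedVariationOn
        rw [eVariationOn.congr this, eVariationOn.constant_on]
        · simp
        · rintro _ ⟨_, _, rfl⟩ _ ⟨_, _, rfl⟩; rfl
      have hsum : P = kill ω P + δ := by
        funext t; by_cases ht : t = ω <;> simp [kill, δ, ht]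
      have hΨP : (Polynomial.aeval T' p : Y →L[ℂ] Y) = Ψ (kill ω P) + Ψ δ := by
        rw [← hpoly p, ← (hhom _ _ hk hδ).1, ← hsum]
      -- `Ψ δ` has range in the eigenspace
      have hRδ : ∀ y, R (Ψ δ y) = 0 := by
        intro y
        apply hker
        have hl := poly_bv (σ ∪ {ω}) hσc (Polynomial.C (ω : ℂ))
        have e1 := (hhom _ δ hXbv hδ).2
        have e2 := (hhom _ δ hl hδ).2
        have e3 : (fun t : ℝ => (t : ℂ)) * δ =
            (fun t : ℝ => (Polynomial.C (ω : ℂ)).eval (t : ℂ)) * δ := by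
          funext t; by_cases ht : t = ω <;> simp [δ, ht]
        rw [e3, e2, hX, hpoly] at e1
        have := congrArg (fun A : Y →L[ℂ] Y => A y) e1
        simpa [Algebra.algebraMap_eq_smul_one] using this.symm
      ext x
      have h1 := congrArg (fun A : Y →L[ℂ] Y => R (A (J x))) hΨP
      simp only [add_apply, map_add, hRδ, add_zero] at h1
      rw [aeval_inter T T' J hT'J, hRJ] at h1
      exact h1.symm
end

section
/- Let X be a complex Banach space that contains a complemented closed subspace isomorphic (as a Banach space) either to c₀ (the space of complex sequences converging to 0, with the supremum norm) or to ℓ¹ (the space of absolutely summable complex sequences). Then there exist a compact set σ ⊆ ℝ, a bounded linear operator T on X, and a constant C > 0 such that ‖p(T)‖ ≤ C·(sup_{t∈σ}|p(t)| + var_σ(p)) for every polynomial p with complex coefficients, yet no BV(σ) extension of the polynomial calculus of T exists. -/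
open MeasureTheory Filter Topology ZeroAtInfty

namespace BVC

/-- The sequence `1, -1/2, 1/3, ...`. -/
noncomputable def ts (k : ℕ) : ℝ := (-1) ^ k / ((k : ℝ) + 1)

/-- The compact set. -/
def sig : Set ℝ := insert 0 (Set.range ts)

lemma ts_even (j : ℕ) : ts (2 * j) = 1 / (2 * (j : ℝ) + 1) := by
  simp [ts, pow_mul]

lemma ts_odd (j : ℕ) : ts (2 * j + 1) = -(1 / (2 * (j : ℝ) + 2)) := by
  simp only [ts, pow_succ, pow_mul]
  push_cast
  norm_num
  rw [neg_div, one_div]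
  congr 2
  ring

lemma abs_ts (k : ℕ) : |ts k| = 1 / ((k : ℝ) + 1) := by
  have : (0 : ℝ) < (k : ℝ) + 1 := by positivity
  simp [ts, abs_div, abs_of_pos this]

lemma abs_ts_le (k : ℕ) : |ts k| ≤ 1 := by
  rw [abs_ts, div_le_one (by positivity)]
  have : (0 : ℝ) ≤ k := by positivity
  linarith

lemma ts_tendsto : Tendsto ts atTop (𝓝 0) := by
  rw [tendsto_zero_iff_abs_tendsto_zero]
  exact tendsto_one_div_add_atTop_nhds_zero_nat.congr (fun k => (abs_ts k).symm)

lemma sig_compact : IsCompact sig := ts_tendsto.isCompact_insert_range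

lemma zero_mem : (0 : ℝ) ∈ sig := Set.mem_insert _ _

lemma ts_mem (k : ℕ) : ts k ∈ sig := Set.mem_insert_of_mem _ ⟨k, rfl⟩

lemma sig_sub : sig ⊆ Set.Icc (-1) 1 := by
  rintro x (rfl | ⟨k, rfl⟩)
  · simp
  · exact abs_le.mp (abs_ts_le k)

lemma bv_add {f g : ℝ → ℂ} {s : Set ℝ} (hf : BoundedVariationOn f s)
    (hg : BoundedVariationOn g s) : BoundedVariationOn (f + g) s := by
  refine ne_top_of_le_ne_top (ENNReal.add_ne_top.mpr ⟨hf, hg⟩) ?_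
  refine iSup_le fun p => ?_
  calc _ ≤ ∑ i ∈ Finset.range p.1, (edist (f (p.2.1 (i + 1))) (f (p.2.1 i)) +
          edist (g (p.2.1 (i + 1))) (g (p.2.1 i))) :=
        Finset.sum_le_sum fun i _ => edist_add_add_le _ _ _ _
    _ = _ := Finset.sum_add_distrib
    _ ≤ _ := add_le_add (eVariationOn.sum_le p.2.2.1 p.2.2.2)
        (eVariationOn.sum_le p.2.2.1 p.2.2.2)

lemma bv_mono {m : ℝ → ℝ} (hm : Monotone m) (c : ℂ) {s : Set ℝ} {K : ℝ}
    (hb : ∀ x ∈ s, |m x| ≤ K) :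
    BoundedVariationOn (fun t => c * (m t : ℂ)) s := by
  have h1 : BoundedVariationOn m s := (hm.monotoneOn s).boundedVariationOn hb
  have h2 : LipschitzWith ‖c‖₊ (fun x : ℝ => c * (x : ℂ)) := by
    refine LipschitzWith.of_dist_le_mul fun x y => ?_
    rw [dist_eq_norm, ← mul_sub, norm_mul, ← Complex.ofReal_sub, Complex.norm_real, dist_eq_norm]
    rfl
  exact h2.comp_boundedVariationOn h1

lemma poly_smooth (p : Polynomial ℂ) : ContDiff ℝ 1 (fun t : ℝ => p.eval (t : ℂ)) := by
  have h1 : ContDiff ℝ 1 (fun z : ℂ => p.eval z) := by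
    have := (p.contDiff_aeval (𝕜 := ℂ) (R := ℂ) 1)
    simpa using this.restrict_scalars ℝ
  exact h1.comp Complex.ofRealCLM.contDiff

lemma poly_bv (p : Polynomial ℂ) : BoundedVariationOn (fun t : ℝ => p.eval (t : ℂ)) sig := by
  obtain ⟨K, hK⟩ := ((poly_smooth p).locallyLipschitz.locallyLipschitzOn
    (s := sig)).exists_lipschitzOnWith_of_compact sig_compact
  have h1 : BoundedVariationOn (id : ℝ → ℝ) sig := (BoundedVariationOn.id_Icc (-1) 1).mono sig_sub
  exact hK.comp_boundedVariationOn (fun x hx => hx) h1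

lemma poly_sup (p : Polynomial ℂ) {t : ℝ} (ht : t ∈ sig) :
    ‖p.eval (t : ℂ)‖ ≤ bvNorm sig (fun t : ℝ => p.eval (t : ℂ)) := by
  have hb : BddAbove ((fun t : ℝ => ‖p.eval (t : ℂ)‖) '' sig) :=
    sig_compact.bddAbove_image ((poly_smooth p).continuous.norm.continuousOn)
  have := le_csSup hb ⟨t, ht, rfl⟩
  have h2 : 0 ≤ (eVariationOn (fun t : ℝ => p.eval (t : ℂ)) sig).toReal := ENNReal.toReal_nonneg
  unfold bvNorm
  linarith

lemma bvNorm_nonneg (σ : Set ℝ) (f : ℝ → ℂ) : 0 ≤ bvNorm σ f := by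
  refine add_nonneg (Real.sSup_nonneg ?_) ENNReal.toReal_nonneg
  rintro _ ⟨x, _, rfl⟩
  exact norm_nonneg _

lemma anti_even : Antitone (fun j : ℕ => ts (2 * j)) := by
  intro i j hij
  simp only [ts_even]
  have : (i : ℝ) ≤ j := by exact_mod_cast hij
  exact one_div_le_one_div_of_le (by positivity) (by linarith)

lemma mono_odd : Monotone (fun j : ℕ => ts (2 * j + 1)) := by
  intro i j hij
  simp only [ts_odd]
  have : (i : ℝ) ≤ j := by exact_mod_cast hij
  exact neg_le_neg (one_div_le_one_div_of_le (by positivity) (by linarith))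

lemma var_sum (f : ℝ → ℂ) :
    ∑' k, edist (f (ts k)) (f (ts (k + 2))) ≤ 2 * eVariationOn f sig := by
  rw [← tsum_even_add_odd ENNReal.summable ENNReal.summable, two_mul]
  refine add_le_add ?_ ?_
  · refine ENNReal.tsum_le_of_sum_range_le fun n => ?_
    have h := eVariationOn.sum_le (f := f ∘ OrderDual.ofDual)
      (s := OrderDual.ofDual ⁻¹' sig) (n := n)
      (u := fun j => OrderDual.toDual (ts (2 * j))) (fun i j hij => anti_even hij)
      (fun i => ts_mem _)
    rw [eVariationOn.comp_ofDual] at h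
    refine le_trans (le_of_eq (Finset.sum_congr rfl fun j _ => ?_)) h
    rw [edist_comm]; rfl
  · refine ENNReal.tsum_le_of_sum_range_le fun n => ?_
    have h := eVariationOn.sum_le (f := f) (s := sig) (n := n)
      (u := fun j => ts (2 * j + 1)) mono_odd (fun i => ts_mem _)
    refine le_trans (le_of_eq (Finset.sum_congr rfl fun j _ => ?_)) h
    rw [edist_comm]; rfl

lemma poly_var (p : Polynomial ℂ) :
    Summable (fun k => ‖p.eval (ts k : ℂ) - p.eval (ts (k + 2) : ℂ)‖) ∧
    ∑' k, ‖p.eval (ts k : ℂ) - p.eval (ts (k + 2) : ℂ)‖ ≤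
      2 * bvNorm sig (fun t : ℝ => p.eval (t : ℂ)) := by
  have h := var_sum (fun t : ℝ => p.eval (t : ℂ))
  have hv := poly_bv p
  have hne : 2 * eVariationOn (fun t : ℝ => p.eval (t : ℂ)) sig ≠ ⊤ :=
    ENNReal.mul_ne_top (by simp) hv
  have hne' := ne_top_of_le_ne_top hne h
  have e : ∀ k, ‖p.eval (ts k : ℂ) - p.eval (ts (k + 2) : ℂ)‖ =
    (edist (p.eval (ts k : ℂ)) (p.eval (ts (k + 2) : ℂ))).toReal := by
    intro k
    rw [edist_dist, ENNReal.toReal_ofReal dist_nonneg, dist_eq_norm]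
  simp only [e]
  refine ⟨ENNReal.summable_toReal hne', ?_⟩
  rw [← ENNReal.tsum_toReal_eq (fun k => edist_ne_top _ _)]
  have h2 := ENNReal.toReal_mono hne h
  rw [ENNReal.toReal_mul] at h2
  refine h2.trans ?_
  have h3 : 0 ≤ sSup ((fun t : ℝ => ‖p.eval (t : ℂ)‖) '' sig) := by
    refine Real.sSup_nonneg ?_
    rintro _ ⟨x, _, rfl⟩
    exact norm_nonneg _
  unfold bvNorm
  simp only [ENNReal.toReal_ofNat]
  linarith

/-- Step function. -/
noncomputable def stp (t : ℝ) : ℝ := if 0 < t then 1 else 0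

lemma stp_mono : Monotone stp := by
  intro a b hab
  unfold stp
  split_ifs <;> linarith

lemma stp_le (t : ℝ) : |stp t| ≤ 1 := by
  unfold stp
  split_ifs <;> norm_num

lemma bv_stp : BoundedVariationOn (fun t => (stp t : ℂ)) sig := by
  simpa using bv_mono stp_mono 1 (s := sig) (K := 1) (fun t _ => stp_le t)

lemma div_pos_case {s : ℝ} (hs : 0 < s) : ∃ h : ℝ → ℂ, BoundedVariationOn h sig ∧
    ∀ t : ℝ, (stp t : ℂ) + ((t : ℂ) - s) * h t = 1 := by
  have hm : Monotone (fun t : ℝ => 1 / (s - min t 0)) := by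
    intro a b hab
    have h1 : min a 0 ≤ min b 0 := min_le_min_right _ hab
    have h2 : min b 0 ≤ 0 := min_le_right _ _
    exact one_div_le_one_div_of_le (by linarith) (by linarith)
  have hb : ∀ t ∈ sig, |(fun t : ℝ => 1 / (s - min t 0)) t| ≤ 1 / s := by
    intro t _
    have h2 : min t 0 ≤ 0 := min_le_right _ _
    have h3 : 0 < s - min t 0 := by linarith
    simp only
    rw [abs_of_pos (by positivity)]
    exact one_div_le_one_div_of_le hs (by linarith)
  refine ⟨_, bv_add (bv_mono stp_mono ((1 / s : ℝ) : ℂ) (fun t _ => stp_le t))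
    (bv_mono hm (-1) hb), fun t => ?_⟩
  simp only [Pi.add_apply]
  have : stp t + (t - s) * ((1 / s) * stp t + (-1) * (1 / (s - min t 0))) = 1 := by
    unfold stp
    split_ifs with h
    · have : s ≠ 0 := hs.ne'
      rw [min_eq_right h.le, sub_zero]; field_simp; ring
    · have h' := not_lt.mp h
      have : s - t ≠ 0 := by linarith
      rw [min_eq_left h']; field_simp; ring
  exact_mod_cast congrArg (fun x : ℝ => (x : ℂ)) this

lemma div_neg_case {s : ℝ} (hs : s < 0) : ∃ h : ℝ → ℂ, BoundedVariationOn h sig ∧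
    ∀ t : ℝ, ((t : ℂ) - s) * h t = stp t := by
  have hm : Monotone (fun t : ℝ => - (1 / (max t 0 - s))) := by
    intro a b hab
    have h1 : max a 0 ≤ max b 0 := max_le_max_right _ hab
    have h2 : 0 ≤ max a 0 := le_max_right _ _
    exact neg_le_neg (one_div_le_one_div_of_le (by linarith) (by linarith))
  have hb : ∀ t ∈ sig, |(fun t : ℝ => - (1 / (max t 0 - s))) t| ≤ 1 / (-s) := by
    intro t _
    have h2 : 0 ≤ max t 0 := le_max_right _ _
    have h3 : 0 < max t 0 - s := by linarith
    simp only
    rw [abs_neg, abs_of_pos (by positivity)]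
    exact one_div_le_one_div_of_le (by linarith) (by linarith)
  have hc : Monotone (fun t : ℝ => 1 / s + -(1 / s) * stp t) := by
    have : 0 ≤ -(1 / s) := by
      rw [neg_nonneg]; exact (one_div_neg.mpr hs).le
    intro a b hab
    exact add_le_add_right (mul_le_mul_of_nonneg_left (stp_mono hab) this) _
  have hcb : ∀ t ∈ sig, |(fun t : ℝ => 1 / s + -(1 / s) * stp t) t| ≤ |1 / s| := by
    intro t _
    simp only [stp]
    split_ifs <;> simp
  refine ⟨_, bv_add (bv_mono hc 1 hcb)
    (bv_mono hm (-1) hb), fun t => ?_⟩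
  simp only [Pi.add_apply]
  have : (t - s) * (1 * (1 / s + -(1 / s) * stp t) + (-1) * (-(1 / (max t 0 - s)))) = stp t := by
    unfold stp
    split_ifs with h
    · have : t - s ≠ 0 := by linarith
      rw [max_eq_left h.le]; field_simp; ring
    · rw [max_eq_right (not_lt.mp h)]; field_simp; ring
  exact_mod_cast congrArg (fun x : ℝ => (x : ℂ)) this

lemma noext {X : Type*} [NormedAddCommGroup X] [NormedSpace ℂ X] (T : X →L[ℂ] X)
    (φ : ℕ → X →L[ℂ] ℂ) (e : X) (h1 : ∀ k, φ k e = 1)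
    (h2 : ∀ k x, φ k (T x) = ts k * φ k x)
    (h3 : ∀ x, ∃ l, Tendsto (fun k => φ k x) atTop (𝓝 l)) : ¬ HasBVExtension sig T := by
  rintro ⟨C', -, Ψ, hΨ, -, hp⟩
  have hlin : ∀ (s : ℝ) (h : ℝ → ℂ), BoundedVariationOn h sig → 
      Ψ (fun t : ℝ => ((t : ℂ) - s) * h t) = (T - (s : ℂ) • 1) ∘L Ψ h := by
    intro s h hh
    have hX := hp (Polynomial.X - Polynomial.C (s : ℂ))
    have hb := poly_bv (Polynomial.X - Polynomial.C (s : ℂ))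
    have := (hΨ _ h hb hh).2
    rw [hX] at this
    simp only [map_sub, Polynomial.aeval_X, Polynomial.aeval_C, Algebra.algebraMap_eq_smul_one] at this
    rw [← this]
    congr 1
    ext t
    simp
  have hann : ∀ k x, φ k (((T - (ts k : ℂ) • 1) : X →L[ℂ] X) x) = 0 := by
    intro k x
    simp [h2]
  set q := Ψ (fun t => (stp t : ℂ)) e with hq
  have hone : Ψ (fun _ => 1) = 1 := by
    have := hp 1
    simpa using this
  have hev : ∀ j, φ (2 * j) q = 1 := by
    intro j
    have hs : 0 < ts (2 * j) := by rw [ts_even]; positivity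
    obtain ⟨h, hh, hid⟩ := div_pos_case hs
    have hb2 : BoundedVariationOn (fun t : ℝ => ((t : ℂ) - ts (2 * j)) * h t) sig := by
      have h1b : BoundedVariationOn (fun _ : ℝ => (1 : ℂ)) sig := by
        simpa using poly_bv 1
      have h2b : BoundedVariationOn (fun t => (-1) * (stp t : ℂ)) sig :=
        bv_mono stp_mono (-1) (s := sig) (K := 1) (fun t _ => stp_le t)
      have := bv_add h1b h2b
      convert this using 1
      ext t
      simp only [Pi.add_apply]
      linear_combination hid t
    have hadd := (hΨ _ _ bv_stp hb2).1
    have he : (fun t => (stp t : ℂ)) + (fun t : ℝ => ((t : ℂ) - ts (2 * j)) * h t) =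
        fun _ => 1 := by
      ext t
      exact hid t
    rw [he, hone, hlin _ h hh] at hadd
    have := congrArg (fun A : X →L[ℂ] X => φ (2 * j) (A e)) hadd
    simp only [add_apply, ContinuousLinearMap.comp_apply, map_add, hann,
      add_zero] at this
    rw [hq, ← this]
    exact h1 _
  have hod : ∀ j, φ (2 * j + 1) q = 0 := by
    intro j
    have hs : ts (2 * j + 1) < 0 := by rw [ts_odd, neg_lt_zero]; positivity
    obtain ⟨h, hh, hid⟩ := div_neg_case hs
    have he : (fun t : ℝ => ((t : ℂ) - ts (2 * j + 1)) * h t) = fun t => (stp t : ℂ) := by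
      ext t
      exact hid t
    have := hlin (ts (2 * j + 1)) h hh
    rw [he] at this
    rw [hq, this, ContinuousLinearMap.comp_apply, hann]
  obtain ⟨l, hl⟩ := h3 q
  have l1 : Tendsto (fun j => φ (2 * j) q) atTop (𝓝 l) :=
    hl.comp (tendsto_atTop_mono (fun j => by simp only [id]; omega) tendsto_id)
  have l2 : Tendsto (fun j => φ (2 * j + 1) q) atTop (𝓝 l) :=
    hl.comp (tendsto_atTop_mono (fun j => by simp only [id]; omega) tendsto_id)
  simp only [hev] at l1
  simp only [hod] at l2
  have a1 := tendsto_nhds_unique l1 tendsto_const_nhds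
  have a2 := tendsto_nhds_unique l2 tendsto_const_nhds
  rw [a1] at a2
  exact one_ne_zero a2

lemma eig {X : Type*} [NormedAddCommGroup X] [NormedSpace ℂ X] (T : X →L[ℂ] X)
    (φ : X →L[ℂ] ℂ) (c : ℂ) (h : ∀ x, φ (T x) = c * φ x) (p : Polynomial ℂ) (x : X) :
    φ ((Polynomial.aeval T p : X →L[ℂ] X) x) = p.eval c * φ x := by
  induction p using Polynomial.induction_on' generalizing x with
  | add p q hp hq => simp [hp, hq, add_mul]
  | monomial n a =>
    have : ∀ x, φ ((T ^ n) x) = c ^ n * φ x := by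
      intro x
      induction n generalizing x with
      | zero => simp
      | succ n ih => 
        rw [pow_succ, mul_apply_eq_comp, ih, h]; ring
    rw [Polynomial.aeval_monomial, Algebra.algebraMap_eq_smul_one, smul_mul_assoc, one_mul,
      Polynomial.eval_monomial, smul_apply, map_smul, this, smul_eq_mul, mul_assoc]

lemma main {X Y : Type*} [NormedAddCommGroup X] [NormedSpace ℂ X]
    [NormedAddCommGroup Y] [NormedSpace ℂ Y] (i : Y →L[ℂ] X) (P : X →L[ℂ] Y)
    (hPi : ∀ y, P (i y) = y) (S : Y →L[ℂ] Y)
    (φ : ℕ → Y →L[ℂ] ℂ) (e : Y) (h1 : ∀ k, φ k e = 1)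
    (h2 : ∀ k x, φ k (S x) = ts k * φ k x)
    (h3 : ∀ x, ∃ l, Tendsto (fun k => φ k x) atTop (𝓝 l))
    (K : ℝ) (hK : 0 ≤ K) (hS : ∀ (p : Polynomial ℂ) (y : Y),
      ‖(Polynomial.aeval S p : Y →L[ℂ] Y) y‖ ≤ K * bvNorm sig (fun t : ℝ => p.eval (t : ℂ)) * ‖y‖) :
    ∃ σ : Set ℝ, IsCompact σ ∧
      ∃ (T : X →L[ℂ] X) (C : ℝ), 0 < C ∧
        (∀ p : Polynomial ℂ,
          ‖(Polynomial.aeval T p : X →L[ℂ] X)‖ ≤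
            C * bvNorm σ (fun t : ℝ => p.eval (t : ℂ))) ∧
        ¬ HasBVExtension σ T := by
  refine ⟨sig, sig_compact, i ∘L S ∘L P, ‖i‖ * K * ‖P‖ + (1 + ‖i‖ * ‖P‖), by positivity, ?_, ?_⟩
  · intro p
    have hform : ∀ x, (Polynomial.aeval (i ∘L S ∘L P) p : X →L[ℂ] X) x =
        i ((Polynomial.aeval S p : Y →L[ℂ] Y) (P x)) + p.eval 0 • (x - i (P x)) := by
      intro x
      induction p using Polynomial.induction_on' with
      | add p q hp hq =>
        simp only [map_add, add_apply, hp, hq, Polynomial.eval_add, add_smul]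
        abel
      | monomial n a =>
        have hpow : ∀ n : ℕ, ((i ∘L S ∘L P) ^ n) x =
            i ((S ^ n) (P x)) + (0 : ℂ) ^ n • (x - i (P x)) := by
          intro n
          induction n with
          | zero => simp
          | succ n ih =>
            rw [pow_succ', mul_apply_eq_comp, ih, pow_succ' S]
            simp [hPi]
        simp only [Polynomial.aeval_monomial, Algebra.algebraMap_eq_smul_one, smul_mul_assoc,
          one_mul, smul_apply, hpow, smul_smul, smul_add, Polynomial.eval_monomial, map_smul]
    have hnn := bvNorm_nonneg sig (fun t : ℝ => p.eval (t : ℂ))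
    set N := bvNorm sig (fun t : ℝ => p.eval (t : ℂ)) with hN
    have h0 : ‖p.eval 0‖ ≤ N := by simpa using poly_sup p zero_mem
    refine ContinuousLinearMap.opNorm_le_bound _ (by positivity) fun x => ?_
    rw [hform]
    have hP := P.le_opNorm x
    have b1 : ‖i ((Polynomial.aeval S p : Y →L[ℂ] Y) (P x))‖ ≤ ‖i‖ * (K * N * (‖P‖ * ‖x‖)) := by
      refine (i.le_opNorm _).trans ?_
      gcongr
      refine (hS p _).trans ?_
      gcongr
    have b2 : ‖p.eval 0 • (x - i (P x))‖ ≤ N * (‖x‖ + ‖i‖ * (‖P‖ * ‖x‖)) := by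
      rw [norm_smul]
      gcongr
      refine (norm_sub_le _ _).trans ?_
      gcongr
      refine (i.le_opNorm _).trans ?_
      gcongr
    refine (norm_add_le _ _).trans ((add_le_add b1 b2).trans (le_of_eq ?_))
    ring
  · refine noext _ (fun k => φ k ∘L P) (i e) ?_ ?_ ?_
    · intro k; simp [hPi, h1]
    · intro k x; simp [hPi, h2]
    · intro x; exact h3 (P x)

/-- Prepend an entry to a sequence. -/
def cs (a : ℂ) (u : ℕ → ℂ) : ℕ → ℂ
  | 0 => a
  | k + 1 => u k

section czero

/-- Build an element of `c₀`. -/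
def mkc (u : ℕ → ℂ) (hu : Tendsto u atTop (𝓝 0)) : C₀(ℕ, ℂ) where
  toFun := u
  continuous_toFun := continuous_of_discreteTopology
  zero_at_infty' := by
    rw [Filter.cocompact_eq_cofinite, Nat.cofinite_eq_atTop]; exact hu

lemma mkc_apply (u : ℕ → ℂ) (hu : Tendsto u atTop (𝓝 0)) (n : ℕ) : mkc u hu n = u n := rfl

lemma c0_tendsto (x : C₀(ℕ, ℂ)) : Tendsto (fun n => x n) atTop (𝓝 0) := by
  have := x.zero_at_infty'
  rw [Filter.cocompact_eq_cofinite, Nat.cofinite_eq_atTop] at this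
  exact this

lemma c0_apply_le (x : C₀(ℕ, ℂ)) (n : ℕ) : ‖x n‖ ≤ ‖x‖ := by
  rw [← ZeroAtInftyContinuousMap.norm_toBCF_eq_norm]
  exact x.toBCF.norm_coe_le_norm n

lemma c0_norm_le (x : C₀(ℕ, ℂ)) {M : ℝ} (hM : 0 ≤ M) (h : ∀ n, ‖x n‖ ≤ M) : ‖x‖ ≤ M := by
  rw [← ZeroAtInftyContinuousMap.norm_toBCF_eq_norm]
  exact (BoundedContinuousFunction.norm_le hM).mpr h

/-- Coordinate functional. -/
noncomputable def cev (n : ℕ) : C₀(ℕ, ℂ) →L[ℂ] ℂ :=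
  LinearMap.mkContinuous
    { toFun := fun x => x n
      map_add' := fun _ _ => rfl
      map_smul' := fun _ _ => rfl } 1 (fun x => by simpa using c0_apply_le x n)

lemma cev_apply (n : ℕ) (x : C₀(ℕ, ℂ)) : cev n x = x n := rfl

lemma cT_aux (x : C₀(ℕ, ℂ)) :
    Tendsto (cs 0 (fun k => (ts k : ℂ) * (x 0 + x (k + 1)))) atTop (𝓝 0) := by
  rw [← tendsto_add_atTop_iff_nat 1]
  have h1 : Tendsto (fun k => (ts k : ℂ)) atTop (𝓝 0) := by
    have := (Complex.continuous_ofReal.tendsto 0).comp ts_tendsto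
    simpa [Function.comp_def] using this
  have h2 : Tendsto (fun k => x 0 + x (k + 1)) atTop (𝓝 (x 0 + 0)) :=
    tendsto_const_nhds.add ((tendsto_add_atTop_iff_nat 1).mpr (c0_tendsto x))
  have := h1.mul h2
  rw [zero_mul] at this
  exact this

/-- The operator on `c₀`. -/
noncomputable def cT : C₀(ℕ, ℂ) →L[ℂ] C₀(ℕ, ℂ) :=
  LinearMap.mkContinuous
    { toFun := fun x => mkc _ (cT_aux x)
      map_add' := fun x y => by
        ext n
        cases n with
        | zero => simp [mkc_apply, cs]
        | succ n => simp [mkc_apply, cs]; ring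
      map_smul' := fun c x => by
        ext n
        cases n with
        | zero => simp [mkc_apply, cs]
        | succ n => simp [mkc_apply, cs]; ring } 2 (fun x => by
    refine c0_norm_le _ (by positivity) fun n => ?_
    cases n with
    | zero => simp [mkc_apply, cs]
    | succ n =>
      simp only [LinearMap.coe_mk, AddHom.coe_mk, mkc_apply, cs, norm_mul, Complex.norm_real,
        Real.norm_eq_abs]
      have h1 := abs_ts_le n
      have h2 := norm_add_le (x 0) (x (n + 1))
      have h3 := c0_apply_le x 0
      have h4 := c0_apply_le x (n + 1)
      have h5 : ‖x 0 + x (n + 1)‖ ≤ 2 * ‖x‖ := by linarith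
      calc _ ≤ 1 * (2 * ‖x‖) := by gcongr
        _ = _ := one_mul _)

lemma cT_zero (x : C₀(ℕ, ℂ)) : cT x 0 = 0 := rfl
lemma cT_succ (x : C₀(ℕ, ℂ)) (k : ℕ) : cT x (k + 1) = ts k * (x 0 + x (k + 1)) := rfl

theorem case_c0 {X : Type*} [NormedAddCommGroup X] [NormedSpace ℂ X]
    (i : C₀(ℕ, ℂ) →L[ℂ] X) (P : X →L[ℂ] C₀(ℕ, ℂ)) (hPi : ∀ y, P (i y) = y) :
    ∃ σ : Set ℝ, IsCompact σ ∧
      ∃ (T : X →L[ℂ] X) (C : ℝ), 0 < C ∧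
        (∀ p : Polynomial ℂ,
          ‖(Polynomial.aeval T p : X →L[ℂ] X)‖ ≤
            C * bvNorm σ (fun t : ℝ => p.eval (t : ℂ))) ∧
        ¬ HasBVExtension σ T := by
  have he : Tendsto (cs 1 (fun _ => 0)) atTop (𝓝 0) := by
    rw [← tendsto_add_atTop_iff_nat 1]
    exact tendsto_const_nhds
  have h2 : ∀ k x, (cev 0 + cev (k + 1)) (cT x) = ts k * (cev 0 + cev (k + 1)) x := by
    intro k x
    simp [cev_apply, cT_zero, cT_succ]
  refine main i P hPi cT (fun k => cev 0 + cev (k + 1)) (mkc _ he) ?_ h2 ?_ 3 (by norm_num) ?_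
  · intro k
    simp [cev_apply, mkc_apply, cs]
  · intro x
    exact ⟨x 0 + 0, tendsto_const_nhds.add ((tendsto_add_atTop_iff_nat 1).mpr (c0_tendsto x))⟩
  · intro p x
    have hnn := bvNorm_nonneg sig (fun t : ℝ => p.eval (t : ℂ))
    have hs : ∀ t ∈ sig, _ := fun t ht => poly_sup p (t := t) ht
    set N := bvNorm sig (fun t : ℝ => p.eval (t : ℂ)) with hN
    have e0 : ‖(Polynomial.aeval cT p : C₀(ℕ, ℂ) →L[ℂ] C₀(ℕ, ℂ)) x 0‖ ≤ N * ‖x‖ := by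
      have := eig cT (cev 0) 0 (fun x => by simp [cev_apply, cT_zero]) p x
      rw [cev_apply, cev_apply] at this
      rw [this, norm_mul]
      gcongr
      · simpa using hs 0 zero_mem
      · exact c0_apply_le x 0
    refine c0_norm_le _ (by positivity) fun n => ?_
    cases n with
    | zero => 
      refine e0.trans ?_
      have : 0 ≤ N * ‖x‖ := by positivity
      linarith
    | succ n =>
      have h := eig cT _ _ (h2 n) p x
      simp only [add_apply, cev_apply] at h
      have h5 : ‖x 0 + x (n + 1)‖ ≤ 2 * ‖x‖ := by
        have h2 := norm_add_le (x 0) (x (n + 1))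
        have h3 := c0_apply_le x 0
        have h4 := c0_apply_le x (n + 1)
        linarith
      rw [← eq_sub_iff_add_eq'] at h
      rw [h]
      refine (norm_sub_le _ _).trans ?_
      rw [norm_mul]
      have : ‖Polynomial.eval (ts n : ℂ) p‖ * ‖x 0 + x (n + 1)‖ ≤ N * (2 * ‖x‖) := by
        gcongr
        exact hs _ (ts_mem n)
      linarith

end czero

section lone

/-- The space `ℓ¹`. -/
noncomputable abbrev L1 := lp (fun _ : ℕ => ℂ) 1

lemma l1_summable (x : L1) : Summable (fun n => ‖x n‖) := by
  simpa using (memℓp_gen_iff (p := 1) (by simp)).mp (lp.memℓp x)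

lemma l1_norm (x : L1) : ‖x‖ = ∑' n, ‖x n‖ := by
  have := lp.norm_eq_tsum_rpow (p := 1) (by simp) x
  simpa using this

lemma l1_norm' (x : L1) : ‖x‖ = ‖x 0‖ + ∑' n, ‖x (n + 1)‖ := by
  rw [l1_norm, (l1_summable x).tsum_eq_zero_add]

/-- Build an element of `ℓ¹`. -/
noncomputable def mkl (u : ℕ → ℂ) (hu : Summable (fun n => ‖u n‖)) : L1 :=
  ⟨u, (memℓp_gen_iff (p := 1) (by simp)).mpr (by simpa using hu)⟩

lemma mkl_apply (u : ℕ → ℂ) (hu : Summable (fun n => ‖u n‖)) (n : ℕ) : mkl u hu n = u n := rfl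

lemma inj_aux (k : ℕ) : Function.Injective (fun j : ℕ => k + 1 + 2 * j) := by
  intro a b h
  simp only at h
  omega

lemma tail_summable (x : L1) (k : ℕ) : Summable (fun j => ‖x (k + 1 + 2 * j)‖) :=
  (l1_summable x).comp_injective (inj_aux k)

lemma tail_le (x : L1) (k : ℕ) : ‖∑' j, x (k + 1 + 2 * j)‖ ≤ ∑' j, ‖x (j + (k + 1))‖ := by
  refine (norm_tsum_le_tsum_norm (tail_summable x k)).trans ?_
  have h1 : Summable (fun j => ‖x (j + (k + 1))‖) := (summable_nat_add_iff (k + 1)).mpr (l1_summable x)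
  have := tsum_comp_le_tsum_of_inj h1 (fun _ => norm_nonneg _)
    (i := fun j : ℕ => 2 * j) (fun a b h => by simp only at h; omega)
  refine le_trans (le_of_eq (tsum_congr fun j => ?_)) this
  simp only [Function.comp]
  rw [add_comm]

lemma tail_le' (x : L1) (k : ℕ) : ‖∑' j, x (k + 1 + 2 * j)‖ ≤ ‖x‖ := by
  refine (tail_le x k).trans ?_
  rw [l1_norm]
  exact tsum_comp_le_tsum_of_inj (l1_summable x) (fun _ => norm_nonneg _)
    (i := fun j : ℕ => j + (k + 1)) (fun a b h => by simp only at h; omega)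

/-- The functionals on `ℓ¹`. -/
noncomputable def lphi (k : ℕ) : L1 →L[ℂ] ℂ :=
  LinearMap.mkContinuous
    { toFun := fun x => x 0 + ∑' j, x (k + 1 + 2 * j)
      map_add' := fun x y => by
        simp only [lp.coeFn_add, Pi.add_apply]
        rw [(tail_summable x k).of_norm.tsum_add (tail_summable y k).of_norm]
        ring
      map_smul' := fun c x => by
        simp only [lp.coeFn_smul, Pi.smul_apply, smul_eq_mul, RingHom.id_apply]
        rw [tsum_mul_left]
        ring } 2 (fun x => by
    have h1 := tail_le' x k
    have h2 := lp.norm_apply_le_norm (p := 1) (by simp) x 0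
    refine (norm_add_le _ _).trans ?_
    linarith)

lemma lphi_apply (k : ℕ) (x : L1) : lphi k x = x 0 + ∑' j, x (k + 1 + 2 * j) := rfl

lemma lphi_le (k : ℕ) (x : L1) : ‖lphi k x‖ ≤ 2 * ‖x‖ := by
  have h1 := tail_le' x k
  have h2 := lp.norm_apply_le_norm (p := 1) (by simp) x 0
  refine (norm_add_le _ _).trans ?_
  linarith

lemma lphi_sub (k : ℕ) (x : L1) : x (k + 1) = lphi k x - lphi (k + 2) x := by
  rw [lphi_apply, lphi_apply, (tail_summable x k).of_norm.tsum_eq_zero_add]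
  have : ∀ j, x (k + 1 + 2 * (j + 1)) = x (k + 2 + 1 + 2 * j) := by
    intro j
    rw [show k + 1 + 2 * (j + 1) = k + 2 + 1 + 2 * j by ring]
  simp only [this]
  simp

lemma lphi_tendsto (x : L1) : Tendsto (fun k => lphi k x) atTop (𝓝 (x 0)) := by
  have h : Tendsto (fun k : ℕ => ∑' j, x (k + 1 + 2 * j)) atTop (𝓝 0) := by
    refine squeeze_zero_norm (fun k => tail_le x k) ?_
    exact (tendsto_add_atTop_iff_nat 1).mpr (tendsto_sum_nat_add (fun n => ‖x n‖))
  have := h.const_add (x 0)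
  rw [add_zero] at this
  exact this

lemma mult_bound (a : ℕ → ℂ) (A V : ℝ) (hA : ∀ k, ‖a k‖ ≤ A)
    (hs : Summable (fun k => ‖a k - a (k + 2)‖)) (hV : ∑' k, ‖a k - a (k + 2)‖ ≤ V) (x : L1) :
    Summable (fun k => ‖a k * lphi k x - a (k + 2) * lphi (k + 2) x‖) ∧
    ∑' k, ‖a k * lphi k x - a (k + 2) * lphi (k + 2) x‖ ≤ (A + 2 * V) * ‖x‖ := by
  have hA0 : 0 ≤ A := (norm_nonneg _).trans (hA 0)
  have hb : ∀ k, ‖a k * lphi k x - a (k + 2) * lphi (k + 2) x‖ ≤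
      A * ‖x (k + 1)‖ + ‖a k - a (k + 2)‖ * (2 * ‖x‖) := by
    intro k
    have : a k * lphi k x - a (k + 2) * lphi (k + 2) x =
        a k * x (k + 1) + (a k - a (k + 2)) * lphi (k + 2) x := by
      rw [lphi_sub]; ring
    rw [this]
    refine (norm_add_le _ _).trans ?_
    rw [norm_mul, norm_mul]
    gcongr
    · exact hA k
    · exact lphi_le _ _
  have s1 : Summable (fun k => ‖x (k + 1)‖) := (summable_nat_add_iff 1).mpr (l1_summable x)
  have s2 := (s1.mul_left A).add (hs.mul_right (2 * ‖x‖))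
  have s3 := Summable.of_nonneg_of_le (fun _ => norm_nonneg _) hb s2
  refine ⟨s3, (s3.tsum_le_tsum hb s2).trans ?_⟩
  rw [(s1.mul_left A).tsum_add (hs.mul_right (2 * ‖x‖)), tsum_mul_left, tsum_mul_right]
  have h1 : ∑' k, ‖x (k + 1)‖ ≤ ‖x‖ := by
    rw [l1_norm' x]
    have := norm_nonneg (x 0)
    linarith
  have h2 : A * ∑' k, ‖x (k + 1)‖ ≤ A * ‖x‖ := by gcongr
  have h3 : (∑' k, ‖a k - a (k + 2)‖) * (2 * ‖x‖) ≤ V * (2 * ‖x‖) := by gcongr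
  linarith

lemma ts_bound (x : L1) :
    Summable (fun k => ‖(ts k : ℂ) * lphi k x - (ts (k + 2) : ℂ) * lphi (k + 2) x‖) ∧
    ∑' k, ‖(ts k : ℂ) * lphi k x - (ts (k + 2) : ℂ) * lphi (k + 2) x‖ ≤
      (1 + 2 * (2 * bvNorm sig (fun t : ℝ => (Polynomial.X : Polynomial ℂ).eval (t : ℂ)))) * ‖x‖ := by
  have h := poly_var Polynomial.X
  simp only [Polynomial.eval_X] at h ⊢
  exact mult_bound (fun k => (ts k : ℂ)) 1 _ (fun k => by simpa using abs_ts_le k) h.1 h.2 x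

lemma lT_aux (x : L1) : Summable (fun n => ‖cs 0 (fun k => (ts k : ℂ) * lphi k x -
    (ts (k + 2) : ℂ) * lphi (k + 2) x) n‖) := by
  rw [← summable_nat_add_iff 1]
  exact (ts_bound x).1

/-- The operator on `ℓ¹`. -/
noncomputable def lT : L1 →L[ℂ] L1 :=
  LinearMap.mkContinuous
    { toFun := fun x => mkl _ (lT_aux x)
      map_add' := fun x y => by
        ext n
        cases n with
        | zero => simp [mkl_apply, cs]
        | succ n => simp [mkl_apply, cs]; ring
      map_smul' := fun c x => by
        ext n
        cases n with
        | zero => simp [mkl_apply, cs]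
        | succ n => simp [mkl_apply, cs]; ring } _ (fun x => by
    rw [l1_norm']
    simp only [LinearMap.coe_mk, AddHom.coe_mk, mkl_apply, cs, norm_zero, zero_add]
    exact (ts_bound x).2)

lemma lT_zero (x : L1) : lT x 0 = 0 := rfl
lemma lT_succ (x : L1) (k : ℕ) : lT x (k + 1) = (ts k : ℂ) * lphi k x -
    (ts (k + 2) : ℂ) * lphi (k + 2) x := rfl

lemma lphi_lT (k : ℕ) (x : L1) : lphi k (lT x) = ts k * lphi k x := by
  rw [lphi_apply, lT_zero, zero_add]
  have hs := (tail_summable (lT x) k).of_norm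
  have h1 := hs.hasSum.tendsto_sum_nat
  have h2 : ∀ n, ∑ j ∈ Finset.range n, lT x (k + 1 + 2 * j) =
      ts k * lphi k x - ts (k + 2 * n) * lphi (k + 2 * n) x := by
    intro n
    induction n with
    | zero => simp
    | succ n ih =>
      rw [Finset.sum_range_succ, ih, show k + 1 + 2 * n = (k + 2 * n) + 1 by ring, lT_succ,
        show k + 2 * (n + 1) = k + 2 * n + 2 by ring]
      ring
  simp only [h2] at h1
  have h3 : Tendsto (fun k => (ts k : ℂ)) atTop (𝓝 0) := by
    have := (Complex.continuous_ofReal.tendsto 0).comp ts_tendsto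
    simpa [Function.comp_def] using this
  have h4 : Tendsto (fun n => k + 2 * n) atTop atTop :=
    tendsto_atTop_mono (fun j => by simp only [id]; omega) tendsto_id
  have h5 := ((h3.mul (lphi_tendsto x)).comp h4).const_sub (ts k * lphi k x)
  rw [zero_mul, sub_zero] at h5
  exact tendsto_nhds_unique h1 h5

/-- Zeroth coordinate. -/
noncomputable def lev : L1 →L[ℂ] ℂ :=
  LinearMap.mkContinuous
    { toFun := fun x => x 0
      map_add' := fun _ _ => rfl
      map_smul' := fun _ _ => rfl } 1 (fun x => by
        rw [one_mul]
        exact lp.norm_apply_le_norm (p := 1) (by simp) x 0)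

lemma lev_apply (x : L1) : lev x = x 0 := rfl

theorem case_l1 {X : Type*} [NormedAddCommGroup X] [NormedSpace ℂ X]
    (i : L1 →L[ℂ] X) (P : X →L[ℂ] L1) (hPi : ∀ y, P (i y) = y) :
    ∃ σ : Set ℝ, IsCompact σ ∧
      ∃ (T : X →L[ℂ] X) (C : ℝ), 0 < C ∧
        (∀ p : Polynomial ℂ,
          ‖(Polynomial.aeval T p : X →L[ℂ] X)‖ ≤
            C * bvNorm σ (fun t : ℝ => p.eval (t : ℂ))) ∧
        ¬ HasBVExtension σ T := by
  have he : Summable (fun n => ‖cs 1 (fun _ => 0) n‖) := by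
    rw [← summable_nat_add_iff 1]
    simp [cs]
  refine main i P hPi lT lphi (mkl _ he) ?_ lphi_lT (fun x => ⟨_, lphi_tendsto x⟩) 6
    (by norm_num) ?_
  · intro k
    have : ∀ j, mkl _ he (k + 1 + 2 * j) = 0 := by
      intro j
      rw [show k + 1 + 2 * j = (k + 2 * j) + 1 by ring]
      rfl
    rw [lphi_apply]
    simp only [this, tsum_zero, add_zero]
    rfl
  · intro p x
    have hv := poly_var p
    have hs : ∀ t ∈ sig, _ := fun t ht => poly_sup p (t := t) ht
    have hnn := bvNorm_nonneg sig (fun t : ℝ => p.eval (t : ℂ))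
    set N := bvNorm sig (fun t : ℝ => p.eval (t : ℂ)) with hN
    have e0 : ‖(Polynomial.aeval lT p : L1 →L[ℂ] L1) x 0‖ ≤ N * ‖x‖ := by
      have := eig lT lev 0 (fun x => by simp [lev_apply, lT_zero]) p x
      rw [lev_apply, lev_apply] at this
      rw [this, norm_mul]
      gcongr
      · simpa using hs 0 zero_mem
      · exact lp.norm_apply_le_norm (p := 1) (by simp) x 0
    have e1 : ∀ k, (Polynomial.aeval lT p : L1 →L[ℂ] L1) x (k + 1) =
        p.eval (ts k : ℂ) * lphi k x - p.eval (ts (k + 2) : ℂ) * lphi (k + 2) x := by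
      intro k
      rw [lphi_sub, eig lT (lphi k) _ (lphi_lT k), eig lT (lphi (k + 2)) _ (lphi_lT (k + 2))]
    have hb := (mult_bound (fun k => p.eval (ts k : ℂ)) N _ (fun k => hs _ (ts_mem k))
      hv.1 hv.2 x).2
    rw [l1_norm']
    simp only [e1]
    linarith

end lone

end BVC

/-- If the complex Banach space `X` contains a complemented closed subspace
isomorphic to `c₀` (complex sequences converging to `0`, sup norm) or to `ℓ¹` (absolutely
summable complex sequences), then there are a compact set `σ ⊆ ℝ`, a bounded operator `T` on
`X` and a constant `C > 0` such that `‖p(T)‖ ≤ C·(sup_{t∈σ}|p(t)| + var_σ(p))` for every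
complex polynomial `p`, yet no `BV(σ)` extension of the polynomial calculus of `T` exists. -/
theorem stmt7 {X : Type*} [NormedAddCommGroup X] [NormedSpace ℂ X] [CompleteSpace X]
    (h : (∃ X₁ Z : Submodule ℂ X, IsClosed (X₁ : Set X) ∧ IsClosed (Z : Set X) ∧
            IsCompl X₁ Z ∧ Nonempty (C₀(ℕ, ℂ) ≃L[ℂ] ↥X₁)) ∨
         (∃ X₁ Z : Submodule ℂ X, IsClosed (X₁ : Set X) ∧ IsClosed (Z : Set X) ∧
            IsCompl X₁ Z ∧ Nonempty (lp (fun _ : ℕ => ℂ) 1 ≃L[ℂ] ↥X₁))) :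
    ∃ σ : Set ℝ, IsCompact σ ∧
      ∃ (T : X →L[ℂ] X) (C : ℝ), 0 < C ∧
        (∀ p : Polynomial ℂ,
          ‖(Polynomial.aeval T p : X →L[ℂ] X)‖ ≤
            C * bvNorm σ (fun t : ℝ => p.eval (t : ℂ))) ∧
        ¬ HasBVExtension σ T := by
  rcases h with ⟨X₁, Z, h1, h2, hc, ⟨u⟩⟩ | ⟨X₁, Z, h1, h2, hc, ⟨u⟩⟩
  · have ht := Submodule.IsCompl.isTopCompl_of_isClosed hc h1 h2
    refine BVC.case_c0 (X₁.subtypeL ∘L (u : _ →L[ℂ] X₁))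
      ((u.symm : X₁ →L[ℂ] _) ∘L X₁.projectionOntoL Z ht) (fun y => ?_)
    simp
  · have ht := Submodule.IsCompl.isTopCompl_of_isClosed hc h1 h2
    refine BVC.case_l1 (X₁.subtypeL ∘L (u : _ →L[ℂ] X₁))
      ((u.symm : X₁ →L[ℂ] _) ∘L X₁.projectionOntoL Z ht) (fun y => ?_)
    simp
end

section
/- Let (Ω, Σ, μ) be a measure space, let 1 ≤ r < s ≤ ∞, and let K > 0. Suppose (T_p)_{p∈(r,s)} is a consistent family of bounded operators on the complex spaces L^p(μ) with ‖T_p‖ ≤ K for all p ∈ (r,s). Then there exists a unique bounded linear operator U on L^r(μ) such that U x = T_p x (μ-almost everywhere) for every p ∈ (r,s) and every x ∈ L^r(μ) ∩ L^p(μ); moreover ‖U‖ ≤ K. -/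
open MeasureTheory Filter Topology ENNReal

lemma aux_pow_le (a : ℝ≥0∞) {ρ q π : ℝ} (h1 : ρ ≤ q) (h2 : q ≤ π) :
    a ^ q ≤ a ^ ρ + a ^ π := by
  rcases le_total a 1 with h | h
  · exact (ENNReal.rpow_le_rpow_of_exponent_ge h h1).trans le_self_add
  · exact (ENNReal.rpow_le_rpow_of_exponent_le h h2).trans le_add_self

lemma aux_interp {Ω : Type*} [MeasurableSpace Ω] {μ : Measure Ω} {f : Ω → ℂ} {r q p : ℝ≥0∞}
    (hr0 : r ≠ 0) (hp : p ≠ ∞) (h1 : r ≤ q) (h2 : q ≤ p)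
    (hfr : MemLp f r μ) (hfp : MemLp f p μ) : MemLp f q μ := by
  have hq : q ≠ ∞ := (h2.trans_lt hp.lt_top).ne
  have hr : r ≠ ∞ := (h1.trans_lt hq.lt_top).ne
  have hq0 : q ≠ 0 := fun h => hr0 (by simpa [h] using h1)
  have hp0 : p ≠ 0 := fun h => hq0 (by simpa [h] using h2)
  refine ⟨hfr.1, ?_⟩
  have a := lintegral_rpow_enorm_lt_top_of_eLpNorm_lt_top hr0 hr hfr.2
  have b := lintegral_rpow_enorm_lt_top_of_eLpNorm_lt_top hp0 hp hfp.2
  rw [eLpNorm_lt_top_iff_lintegral_rpow_enorm_lt_top hq0 hq]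
  calc ∫⁻ x, ‖f x‖ₑ ^ q.toReal ∂μ
      ≤ ∫⁻ x, (‖f x‖ₑ ^ r.toReal + ‖f x‖ₑ ^ p.toReal) ∂μ :=
        lintegral_mono fun x => aux_pow_le _ (ENNReal.toReal_mono hq h1) (ENNReal.toReal_mono hp h2)
    _ = _ := lintegral_add_left' (hfr.1.enorm.pow_const _) _
    _ < ∞ := ENNReal.add_lt_top.2 ⟨a, b⟩

lemma aux_tendsto (v : ℂ) {ρ : ℝ} (hρ : 0 < ρ) {u : ℕ → ℝ} (hu0 : ∀ n, 0 < u n)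
    (hu : Tendsto u atTop (𝓝 ρ)) :
    Tendsto (fun n => ‖v‖ₑ ^ u n) atTop (𝓝 (‖v‖ₑ ^ ρ)) := by
  have h : ∀ t : ℝ, 0 < t → ‖v‖ₑ ^ t = ENNReal.ofReal (‖v‖ ^ t) := fun t ht => by
    rw [← ofReal_norm_eq_enorm, ENNReal.ofReal_rpow_of_nonneg (norm_nonneg _) ht.le]
  rw [h ρ hρ]
  simp_rw [fun n => h (u n) (hu0 n)]
  exact ENNReal.tendsto_ofReal ((Real.continuousAt_const_rpow' hρ.ne').tendsto.comp hu)

lemma aux_key {Ω : Type*} [MeasurableSpace Ω] {μ : Measure Ω} {f g : Ω → ℂ} {r p : ℝ≥0∞}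
    (hr0 : r ≠ 0) (hp : p ≠ ∞) (hrp : r < p) (hg : AEStronglyMeasurable g μ)
    (hfr : MemLp f r μ) (hfp : MemLp f p μ) {K : ℝ} (hK : 0 < K)
    (H : ∀ q, r < q → q < p → eLpNorm g q μ ≤ ENNReal.ofReal K * eLpNorm f q μ) :
    eLpNorm g r μ ≤ ENNReal.ofReal K * eLpNorm f r μ := by
  have hr : r ≠ ∞ := hrp.ne_top
  have hp0 : p ≠ 0 := (bot_le.trans_lt hrp).ne'
  have hρ : 0 < r.toReal := ENNReal.toReal_pos hr0 hr
  have hlt : r.toReal < p.toReal := (ENNReal.toReal_lt_toReal hr hp).2 hrp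
  obtain ⟨u, -, hu1, hu⟩ := exists_seq_strictAnti_tendsto' hlt
  have hu0 : ∀ n, 0 < u n := fun n => hρ.trans (hu1 n).1
  have a := lintegral_rpow_enorm_lt_top_of_eLpNorm_lt_top hr0 hr hfr.2
  have b := lintegral_rpow_enorm_lt_top_of_eLpNorm_lt_top hp0 hp hfp.2
  have hK0 : ENNReal.ofReal K ≠ 0 := by simpa using hK
  have hKe : ENNReal.ofReal K = ‖(K : ℂ)‖ₑ := by
    rw [← ofReal_norm_eq_enorm]; simp [abs_of_pos hK]
  have Hn : ∀ n, ∫⁻ x, ‖g x‖ₑ ^ u n ∂μ ≤ ENNReal.ofReal K ^ u n * ∫⁻ x, ‖f x‖ₑ ^ u n ∂μ := by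
    intro n
    have hq0 : ENNReal.ofReal (u n) ≠ 0 := by simpa using hu0 n
    have := H (ENNReal.ofReal (u n)) ((ENNReal.lt_ofReal_iff_toReal_lt hr).2 (hu1 n).1)
      ((ENNReal.ofReal_lt_iff_lt_toReal (hu0 n).le hp).2 (hu1 n).2)
    rw [eLpNorm_eq_lintegral_rpow_enorm_toReal hq0 ENNReal.ofReal_ne_top,
      eLpNorm_eq_lintegral_rpow_enorm_toReal hq0 ENNReal.ofReal_ne_top,
      ENNReal.toReal_ofReal (hu0 n).le] at this
    have h2 := ENNReal.rpow_le_rpow this (hu0 n).le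
    rwa [ENNReal.mul_rpow_of_nonneg _ _ (hu0 n).le, ← ENNReal.rpow_mul, ← ENNReal.rpow_mul,
      one_div_mul_cancel (hu0 n).ne', ENNReal.rpow_one, ENNReal.rpow_one] at h2
  have t1 : Tendsto (fun n => ∫⁻ x, ‖f x‖ₑ ^ u n ∂μ) atTop (𝓝 (∫⁻ x, ‖f x‖ₑ ^ r.toReal ∂μ)) := by
    refine tendsto_lintegral_of_dominated_convergence'
      (fun x => ‖f x‖ₑ ^ r.toReal + ‖f x‖ₑ ^ p.toReal) (fun n => hfr.1.enorm.pow_const _)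
      (fun n => Eventually.of_forall fun x => aux_pow_le _ (hu1 n).1.le (hu1 n).2.le) ?_
      (Eventually.of_forall fun x => aux_tendsto _ hρ hu0 hu)
    rw [lintegral_add_left' (hfr.1.enorm.pow_const _)]
    exact (ENNReal.add_lt_top.2 ⟨a, b⟩).ne
  have t2 : Tendsto (fun n => ENNReal.ofReal K ^ u n) atTop (𝓝 (ENNReal.ofReal K ^ r.toReal)) := by
    rw [hKe]; exact aux_tendsto _ hρ hu0 hu
  have hKt : ENNReal.ofReal K ^ r.toReal ≠ ∞ := ENNReal.rpow_ne_top_of_nonneg hρ.le ENNReal.ofReal_ne_top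
  have t3 := ENNReal.Tendsto.mul t2 (Or.inr a.ne) t1 (Or.inr hKt)
  have main : ∫⁻ x, ‖g x‖ₑ ^ r.toReal ∂μ
      ≤ ENNReal.ofReal K ^ r.toReal * ∫⁻ x, ‖f x‖ₑ ^ r.toReal ∂μ := by
    calc ∫⁻ x, ‖g x‖ₑ ^ r.toReal ∂μ
        = ∫⁻ x, liminf (fun n => ‖g x‖ₑ ^ u n) atTop ∂μ :=
          lintegral_congr fun x => ((aux_tendsto _ hρ hu0 hu).liminf_eq).symm
      _ ≤ liminf (fun n => ∫⁻ x, ‖g x‖ₑ ^ u n ∂μ) atTop :=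
          lintegral_liminf_le' fun n => hg.enorm.pow_const _
      _ ≤ liminf (fun n => ENNReal.ofReal K ^ u n * ∫⁻ x, ‖f x‖ₑ ^ u n ∂μ) atTop :=
          liminf_le_liminf (Eventually.of_forall Hn)
      _ = _ := t3.liminf_eq
  rw [eLpNorm_eq_lintegral_rpow_enorm_toReal hr0 hr, eLpNorm_eq_lintegral_rpow_enorm_toReal hr0 hr]
  have h2 := ENNReal.rpow_le_rpow main (z := 1 / r.toReal) (by positivity)
  rwa [ENNReal.mul_rpow_of_nonneg _ _ (by positivity), ← ENNReal.rpow_mul,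
    mul_one_div_cancel hρ.ne', ENNReal.rpow_one] at h2

/-- Let `(Ω, Σ, μ)` be a measure space, `1 ≤ r < s ≤ ∞` and `K > 0`.  If
`(T_p)_{p ∈ (r,s)}` is a consistent family of bounded operators on the complex spaces
`L^p(μ)` with `‖T_p‖ ≤ K` for all `p ∈ (r,s)`, then there is a unique bounded operator `U` on
`L^r(μ)` such that `U x = T_p x` μ-a.e. for every `p ∈ (r,s)` and every
`x ∈ L^r(μ) ∩ L^p(μ)`; moreover `‖U‖ ≤ K`. -/
theorem stmt8 {Ω : Type*} [MeasurableSpace Ω] (μ : Measure Ω)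
    (r s : ℝ≥0∞) (hr : 1 ≤ r) (hrs : r < s) (hs : s ≤ ∞) (K : ℝ) (hK : 0 < K)
    (T : ∀ (p : ℝ≥0∞) [Fact (1 ≤ p)], r < p → p < s → Lp ℂ p μ →L[ℂ] Lp ℂ p μ)
    (hTK : ∀ (p : ℝ≥0∞) [Fact (1 ≤ p)] (hp : r < p) (hps : p < s), ‖T p hp hps‖ ≤ K)
    (hcons : ∀ (p q : ℝ≥0∞) [Fact (1 ≤ p)] [Fact (1 ≤ q)]
        (hp : r < p) (hps : p < s) (hq : r < q) (hqs : q < s)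
        (x : Lp ℂ p μ) (y : Lp ℂ q μ), (x : Ω → ℂ) =ᵐ[μ] (y : Ω → ℂ) →
        (T p hp hps x : Ω → ℂ) =ᵐ[μ] (T q hq hqs y : Ω → ℂ)) :
    haveI : Fact (1 ≤ r) := ⟨hr⟩
    ∃ U : Lp ℂ r μ →L[ℂ] Lp ℂ r μ,
      (∀ (p : ℝ≥0∞) [Fact (1 ≤ p)] (hp : r < p) (hps : p < s)
        (x : Lp ℂ r μ) (y : Lp ℂ p μ), (x : Ω → ℂ) =ᵐ[μ] (y : Ω → ℂ) →
          (U x : Ω → ℂ) =ᵐ[μ] (T p hp hps y : Ω → ℂ)) ∧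
      ‖U‖ ≤ K ∧
      ∀ U' : Lp ℂ r μ →L[ℂ] Lp ℂ r μ,
        (∀ (p : ℝ≥0∞) [Fact (1 ≤ p)] (hp : r < p) (hps : p < s)
          (x : Lp ℂ r μ) (y : Lp ℂ p μ), (x : Ω → ℂ) =ᵐ[μ] (y : Ω → ℂ) →
            (U' x : Ω → ℂ) =ᵐ[μ] (T p hp hps y : Ω → ℂ)) → U' = U := by
  haveI hrF : Fact (1 ≤ r) := ⟨hr⟩
  have hr0 : r ≠ 0 := (zero_lt_one.trans_le hr).ne'
  have hrt : r ≠ ∞ := hrs.ne_top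
  have ex : ∀ x : Lp ℂ r μ, (∃ p, r < p ∧ p < s ∧ MemLp x p μ) →
      ∃ z : Lp ℂ r μ, (∀ (q : ℝ≥0∞) [Fact (1 ≤ q)] (hq : r < q) (hqs : q < s) (y : Lp ℂ q μ),
        (x : Ω → ℂ) =ᵐ[μ] y → (z : Ω → ℂ) =ᵐ[μ] T q hq hqs y) ∧ ‖z‖ ≤ K * ‖x‖ := by
    rintro x ⟨p, hp, hps, hxp⟩
    haveI : Fact (1 ≤ p) := ⟨hr.trans hp.le⟩
    have key : eLpNorm (T p hp hps (hxp.toLp x)) r μ ≤ ENNReal.ofReal K * eLpNorm x r μ := by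
      refine aux_key hr0 hps.ne_top hp (Lp.aestronglyMeasurable _) (Lp.memLp x) hxp hK ?_
      intro q hq hqp
      haveI : Fact (1 ≤ q) := ⟨hr.trans hq.le⟩
      have hxq : MemLp x q μ := aux_interp hr0 hps.ne_top hq.le hqp.le (Lp.memLp x) hxp
      have hqs := hqp.trans hps
      rw [eLpNorm_congr_ae (hcons p q hp hps hq hqs (hxp.toLp x) (hxq.toLp x)
        (hxp.coeFn_toLp.trans hxq.coeFn_toLp.symm)), ← eLpNorm_congr_ae hxq.coeFn_toLp,
        ← Lp.enorm_def, ← Lp.enorm_def, ← ofReal_norm_eq_enorm, ← ofReal_norm_eq_enorm,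
        ← ENNReal.ofReal_mul hK.le]
      exact ENNReal.ofReal_le_ofReal (ContinuousLinearMap.le_of_opNorm_le _ (hTK q hq hqs) _)
    have hz : MemLp (T p hp hps (hxp.toLp x)) r μ :=
      ⟨Lp.aestronglyMeasurable _, key.trans_lt
        (ENNReal.mul_lt_top ENNReal.ofReal_lt_top (Lp.memLp x).2)⟩
    refine ⟨hz.toLp _, ?_, ?_⟩
    · intro q _ hq hqs y hxy
      exact hz.coeFn_toLp.trans (hcons p q hp hps hq hqs _ y (hxp.coeFn_toLp.trans hxy))
    · rw [Lp.norm_toLp, Lp.norm_def]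
      refine (ENNReal.toReal_mono
        (ENNReal.mul_ne_top ENNReal.ofReal_ne_top (Lp.memLp x).2.ne) key).trans ?_
      rw [ENNReal.toReal_mul, ENNReal.toReal_ofReal hK.le]
  have shrink : ∀ (x : Lp ℂ r μ) (p q : ℝ≥0∞), r < q → q ≤ p → p < s → MemLp x p μ →
      MemLp x q μ := fun x p q h1 h2 h3 h =>
    aux_interp hr0 h3.ne_top h1.le h2 (Lp.memLp x) h
  let D : Submodule ℂ (Lp ℂ r μ) :=
    { carrier := {x | ∃ p, r < p ∧ p < s ∧ MemLp x p μ}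
      zero_mem' := by
        obtain ⟨p, h1, h2⟩ := exists_between hrs
        exact ⟨p, h1, h2, (MemLp.zero (p := p) (ε := ℂ)).ae_eq (Lp.coeFn_zero ℂ r μ).symm⟩
      add_mem' := by
        rintro x y ⟨p, hp, hps, hx⟩ ⟨q, hq, hqs, hy⟩
        have hm : r < min p q := lt_min hp hq
        refine ⟨min p q, hm, (min_le_left _ _).trans_lt hps, ?_⟩
        exact ((shrink x p _ hm (min_le_left _ _) hps hx).add
          (shrink y q _ hm (min_le_right _ _) hqs hy)).ae_eq (Lp.coeFn_add x y).symm
      smul_mem' := by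
        rintro c x ⟨p, hp, hps, hx⟩
        exact ⟨p, hp, hps, (hx.const_smul c).ae_eq (Lp.coeFn_smul c x).symm⟩ }
  choose! F hF hFn using ex
  let f : D →ₗ[ℂ] Lp ℂ r μ :=
    { toFun := fun x => F x
      map_add' := by
        rintro ⟨x, hx⟩ ⟨y, hy⟩
        obtain ⟨p, hp, hps, hxp⟩ := id hx
        obtain ⟨q, hq, hqs, hyq⟩ := id hy
        have hm : r < min p q := lt_min hp hq
        have hms : min p q < s := (min_le_left _ _).trans_lt hps
        have hxm := shrink x p _ hm (min_le_left _ _) hps hxp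
        have hym := shrink y q _ hm (min_le_right _ _) hqs hyq
        haveI : Fact (1 ≤ min p q) := ⟨hr.trans hm.le⟩
        change F (x + y) = F x + F y
        apply Lp.ext
        have e1 := hF x hx _ hm hms (hxm.toLp x) hxm.coeFn_toLp.symm
        have e2 := hF y hy _ hm hms (hym.toLp y) hym.coeFn_toLp.symm
        have e3 := hF (x + y) (D.add_mem hx hy) _ hm hms (hxm.toLp x + hym.toLp y)
          ((Lp.coeFn_add x y).trans ((hxm.coeFn_toLp.symm.add hym.coeFn_toLp.symm).trans
            (Lp.coeFn_add _ _).symm))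
        rw [map_add] at e3
        exact e3.trans ((Lp.coeFn_add _ _).trans
          ((e1.symm.add e2.symm).trans (Lp.coeFn_add _ _).symm))
      map_smul' := by
        rintro c ⟨x, hx⟩
        obtain ⟨p, hp, hps, hxp⟩ := id hx
        haveI : Fact (1 ≤ p) := ⟨hr.trans hp.le⟩
        change F (c • x) = c • F x
        apply Lp.ext
        have e1 := hF x hx _ hp hps (hxp.toLp x) hxp.coeFn_toLp.symm
        have e3 := hF (c • x) (D.smul_mem c hx) _ hp hps (c • hxp.toLp x)
          ((Lp.coeFn_smul c x).trans ((hxp.coeFn_toLp.symm.const_smul c).trans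
            (Lp.coeFn_smul _ _).symm))
        rw [map_smul] at e3
        exact e3.trans ((Lp.coeFn_smul _ _).trans
          ((e1.symm.const_smul c).trans (Lp.coeFn_smul _ _).symm)) }
  have hdense : DenseRange D.subtype := by
    have : Dense (D : Set (Lp ℂ r μ)) := by
      refine (Lp.simpleFunc.dense (E := ℂ) (μ := μ) hrt).mono ?_
      intro x hx
      obtain ⟨p, h1, h2⟩ := exists_between hrs
      have h3 := Lp.simpleFunc.memLp (⟨x, hx⟩ : Lp.simpleFunc ℂ r μ)
      have h4 := Lp.simpleFunc.toSimpleFunc_eq_toFun (⟨x, hx⟩ : Lp.simpleFunc ℂ r μ)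
      refine ⟨p, h1, h2, MemLp.ae_eq h4 ?_⟩
      exact SimpleFunc.memLp_of_finite_measure_preimage p
        ((SimpleFunc.memLp_iff hr0 hrt).1 h3)
    have h := this.denseRange_val
    exact h
  have hb : ∀ x : D, ‖f x‖ ≤ K * ‖D.subtype x‖ := fun x => hFn x x.2
  refine ⟨f.extendOfNorm D.subtype, ?_, LinearMap.opNorm_extendOfNorm_le hdense hK.le hb, ?_⟩
  · intro p _ hp hps x y hxy
    have hx : x ∈ D := ⟨p, hp, hps, (Lp.memLp y).ae_eq hxy.symm⟩
    have e := LinearMap.extendOfNorm_eq hdense ⟨K, hb⟩ (⟨x, hx⟩ : D)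
    change f.extendOfNorm D.subtype x = F x at e
    rw [e]
    exact hF x hx p hp hps y hxy
  · intro U' hU'
    refine (LinearMap.extendOfNorm_unique hdense K hb U' ?_).symm
    ext1 ⟨x, hx⟩
    obtain ⟨p, hp, hps, hxp⟩ := id hx
    haveI : Fact (1 ≤ p) := ⟨hr.trans hp.le⟩
    change U' x = F x
    apply Lp.ext
    exact (hU' p hp hps x (hxp.toLp x) hxp.coeFn_toLp.symm).trans
      (hF x hx p hp hps _ hxp.coeFn_toLp.symm).symm
end
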